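/- arXiv:2602.19434 — 2 statements merged into one kernel-verified Lean document; each statement's English description precedes it below -/
import Mathlib

section
/- Let m and d be integers with m ≥ 2 and d ≥ 2, and let G = {1,…,m}^d be the d-dimensional grid equipped with the ℓ1 metric (the shortest-path metric of the grid graph). There exists a universal constant c > 0 (independent of m and d) such that: for every C ≥ 1 and every map F : EMD(G) → L_1 with bi-Lipschitz distortion at most C, one has C ≥ c·d·log m. -/
open MeasureTheory Finset

noncomputable section

/-- Points of the grid `{1,…,m}^d` (coordinates taken 0-based). -/
abbrev GPt (m d : ℕ) := Fin d → Fin m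

/-- The ℓ1 metric on the grid `{1,…,m}^d` (the shortest-path metric of the grid graph). -/
def gdistM {m d : ℕ} (u v : GPt m d) : ℝ := ∑ i, |((u i : ℕ) : ℝ) - ((v i : ℕ) : ℝ)|

/-- The transportation cost norm on signed measures of total mass `0` on the grid,
via Kantorovich duality. The earth mover distance between probability measures `μ, ν`
is `emd(μ,ν) = ‖μ - ν‖_TC`. -/
def tcNormG (m d : ℕ) (μ : GPt m d → ℝ) : ℝ :=
  sSup {r : ℝ | ∃ f : GPt m d → ℝ,
    (∀ u v, |f u - f v| ≤ gdistM u v) ∧ r = |∑ x, f x * μ x|}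

/-- Probability measures on the grid: the points of `EMD({1,…,m}^d)`. -/
abbrev ProbMeas (m d : ℕ) := {μ : GPt m d → ℝ // (∀ x, 0 ≤ μ x) ∧ ∑ x, μ x = 1}

/-- The Lebesgue space `L_1(0,1)`. -/
abbrev L1Space : Type := Lp ℝ 1 (volume.restrict (Set.Ioo (0:ℝ) 1))

/-!
Around the uniform measure the probability simplex contains a ball of `TC(G)`, so averaging the
increments of an embedding `F : EMD(G) → L₁` (after a finite-rank approximation) makes it linear.
Hence an inequality between averages of `|⟨f, μ⟩|` over random mass-zero measures `μ` and averages
of `|f x - f y|` over the edges of `G` passes from all functions `f` to `F` with the loss of a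
factor `C`; by the coarea formula it suffices to check it on indicators of sets.

The inequality tests all `κ ≈ log₂ m` dyadic scales at once. At scale `L = 2 ^ (κ - j)`, transport
about `(6 / 5) ^ d * (2 ^ j) ^ d` independent random points of the grid of side `2 ^ κ` to the
points obtained by resampling all coordinates within blocks of side `L`. This has expected
transportation cost of order `d * L`, because balls of a smaller radius contain too few points. For
the indicator of a set `S`, the average of `|μ(S)|` is bounded both by the density of `S` and,
since the independent dipoles cancel, by a square root of its edge boundary. By the entropy form of
edge isoperimetry, the sum over the scales of these averages divided by `L` is at most a constant
times the edge boundary averaged over directions and points. Each scale thus contributes order `d`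
on one side, while the other side stays of order `C`.
-/

section FiniteRank

variable {Ω β : Type*} [MeasurableSpace Ω] {ρ : Measure Ω}

/-- The linear map from `L¹(ρ)` to a finite-dimensional `ℓ¹` space that integrates a function over
each level set of the simple function `h`; it is the conditional expectation onto the functions of
`h`, with its values weighted by the measures of the level sets. -/
def levelIntegral (h : SimpleFunc Ω β) (ρ : Measure Ω) :
    Lp ℝ 1 ρ →ₗ[ℝ] PiLp 1 (fun _ : h.range => ℝ) where
  toFun f := WithLp.toLp 1 fun y => ∫ x in h ⁻¹' {y.1}, f x ∂ρ
  map_add' f g := by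
    ext y
    change ∫ x in h ⁻¹' {y.1}, (f + g) x ∂ρ =
      (∫ x in h ⁻¹' {y.1}, f x ∂ρ) + ∫ x in h ⁻¹' {y.1}, g x ∂ρ
    rw [← integral_add (L1.integrable_coeFn f).integrableOn (L1.integrable_coeFn g).integrableOn]
    exact integral_congr_ae (ae_restrict_of_ae (Lp.coeFn_add f g))
  map_smul' c f := by
    ext y
    change ∫ x in h ⁻¹' {y.1}, (c • f) x ∂ρ = c * ∫ x in h ⁻¹' {y.1}, f x ∂ρ
    rw [← integral_const_mul]
    exact integral_congr_ae (ae_restrict_of_ae (Lp.coeFn_smul c f))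

lemma norm_levelIntegral (h : SimpleFunc Ω β) (f : Lp ℝ 1 ρ) :
    ‖levelIntegral h ρ f‖ = ∑ y : h.range, |∫ x in h ⁻¹' {y.1}, f x ∂ρ| := by
  rw [PiLp.norm_eq_of_L1]
  rfl

lemma L1_norm_eq_sum_setIntegral_level (h : SimpleFunc Ω β) (f : Lp ℝ 1 ρ) :
    ‖f‖ = ∑ y : h.range, ∫ x in h ⁻¹' {y.1}, ‖f x‖ ∂ρ := by
  have hcover : ⋃ y : h.range, h ⁻¹' {y.1} = Set.univ :=
    Set.eq_univ_of_forall fun x => Set.mem_iUnion.2 ⟨⟨h x, h.mem_range_self x⟩, rfl⟩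
  have hdisj : Pairwise (Function.onFun Disjoint fun y : h.range => h ⁻¹' {y.1}) :=
    fun y z hyz => Disjoint.preimage _ (Set.disjoint_singleton.2 (Subtype.coe_injective.ne hyz))
  rw [L1.norm_eq_integral_norm, ← integral_iUnion_fintype (fun y => h.measurableSet_preimage _)
    hdisj fun y => (L1.integrable_coeFn f).norm.integrableOn, hcover, Measure.restrict_univ]

lemma norm_levelIntegral_le (h : SimpleFunc Ω β) (f : Lp ℝ 1 ρ) :
    ‖levelIntegral h ρ f‖ ≤ ‖f‖ := by
  rw [norm_levelIntegral, L1_norm_eq_sum_setIntegral_level h]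
  exact sum_le_sum fun y _ => norm_integral_le_integral_norm (f : Ω → ℝ)

lemma norm_levelIntegral_of_ae_eq_comp (h : SimpleFunc Ω β) (f : Lp ℝ 1 ρ) (φ : β → ℝ)
    (hf : f =ᵐ[ρ] φ ∘ h) : ‖levelIntegral h ρ f‖ = ‖f‖ := by
  rw [norm_levelIntegral, L1_norm_eq_sum_setIntegral_level h]
  refine sum_congr rfl fun y _ => ?_
  have hconst : ∀ᵐ x ∂ρ.restrict (h ⁻¹' {y.1}), f x = φ y.1 := by
    filter_upwards [ae_restrict_of_ae hf, ae_restrict_mem (h.measurableSet_preimage _)]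
      with x hfx (hx : h x = y.1)
    rw [hfx, Function.comp_apply, hx]
  rw [integral_congr_ae hconst, integral_congr_ae (hconst.mono fun x hx => congrArg norm hx),
    integral_const, integral_const, smul_eq_mul, smul_eq_mul, abs_mul,
    abs_of_nonneg measureReal_nonneg, Real.norm_eq_abs]

lemma exists_simpleFunc_forall_eq_comp {ι : Type*} [Finite ι] (s : ι → SimpleFunc Ω ℝ) :
    ∃ h : SimpleFunc Ω (ι → ℝ), ∀ i, ⇑(s i) = (fun y => y i) ∘ h := by
  have hmeas : Measurable fun x i => s i x := measurable_pi_lambda _ fun i => (s i).measurable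
  refine ⟨⟨fun x i => s i x, fun y => hmeas (measurableSet_singleton y), ?_⟩, fun i => rfl⟩
  refine (Set.Finite.pi' fun i => (s i).finite_range).subset ?_
  rintro _ ⟨x, rfl⟩ i
  exact ⟨x, rfl⟩

lemma exists_levelIntegral_norm_ge {K : Set (Lp ℝ 1 ρ)} (hK : IsCompact K) {ε : ℝ} (hε : 0 < ε) :
    ∃ (n : ℕ) (h : SimpleFunc Ω (Fin n → ℝ)), ∀ f ∈ K, ‖f‖ - ε ≤ ‖levelIntegral h ρ f‖ := by
  obtain ⟨n, c, hc⟩ : ∃ (n : ℕ) (c : Fin n → Lp ℝ 1 ρ), K ⊆ ⋃ i, Metric.ball (c i) (ε / 4) := by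
    obtain ⟨t, -, htfin, hcov⟩ := hK.finite_cover_balls (e := ε / 4) (by positivity)
    obtain ⟨n, c, -, rfl⟩ := htfin.fin_param
    exact ⟨n, c, hcov.trans_eq Set.biUnion_range⟩
  have hdense : DenseRange ((↑) : Lp.simpleFunc ℝ 1 ρ → Lp ℝ 1 ρ) :=
    Lp.simpleFunc.denseRange ENNReal.one_ne_top
  choose s hs using fun i => hdense.exists_dist_lt (c i) (ε := ε / 4) (by positivity)
  obtain ⟨h, hh⟩ := exists_simpleFunc_forall_eq_comp fun i => Lp.simpleFunc.toSimpleFunc (s i)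
  refine ⟨n, h, fun f hf => ?_⟩
  obtain ⟨i, hi⟩ := Set.mem_iUnion.1 (hc hf)
  set g : Lp ℝ 1 ρ := (s i : Lp ℝ 1 ρ)
  have hfg : ‖f - g‖ ≤ ε / 2 := by
    rw [← dist_eq_norm]
    linarith [dist_triangle f (c i) g, hs i, Metric.mem_ball.1 hi]
  have hexact : ‖levelIntegral h ρ g‖ = ‖g‖ := by
    refine norm_levelIntegral_of_ae_eq_comp h g (fun y => y i) ?_
    rw [← hh i]
    exact (Lp.simpleFunc.toSimpleFunc_eq_toFun (s i)).symm
  have hclose : ‖levelIntegral h ρ f - levelIntegral h ρ g‖ ≤ ε / 2 := by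
    rw [← map_sub]
    exact (norm_levelIntegral_le h (f - g)).trans hfg
  linarith [norm_le_norm_add_norm_sub' f g,
    norm_le_norm_add_norm_sub (levelIntegral h ρ f) (levelIntegral h ρ g)]

end FiniteRank

section Increment

variable {E G : Type*} [NormedAddCommGroup E] [NormedSpace ℝ E] [FiniteDimensional ℝ E]
  [MeasurableSpace E] [BorelSpace E] {ν : Measure E} [ν.IsAddHaarMeasure]
  [NormedAddCommGroup G]

lemma integrableOn_ball_of_continuous {f : E → G} (hf : Continuous f) (x : E) (r : ℝ) :
    IntegrableOn f (Metric.ball x r) ν :=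
  (hf.continuousOn.integrableOn_compact (isCompact_closedBall x r)).mono_set
    Metric.ball_subset_closedBall

lemma setIntegral_ball_comp_add_le {f : E → ℝ} (hf : Continuous f) (hf₀ : 0 ≤ f) {w : E} {r R : ℝ}
    (hr : r + ‖w‖ ≤ R) :
    ∫ x in Metric.ball 0 r, f (x + w) ∂ν ≤ ∫ x in Metric.ball 0 R, f x ∂ν := by
  have hshift : (· + w) ⁻¹' Metric.ball w r = Metric.ball 0 r := by
    ext x
    simp only [Set.mem_preimage, Metric.mem_ball, dist_eq_norm, add_sub_cancel_right, sub_zero]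
  rw [← hshift, (measurePreserving_add_right ν w).setIntegral_preimage_emb
    (measurableEmbedding_addRight w) f]
  exact setIntegral_mono_set (integrableOn_ball_of_continuous hf 0 R)
    (Filter.Eventually.of_forall hf₀)
    (Metric.ball_subset_ball' (by rwa [dist_zero_right])).eventuallyLE

lemma setIntegral_norm_increment_nsmul_le {φ : E → G} (hφ : Continuous φ) {w : E} {r R : ℝ}
    (n : ℕ) (hr : r + n * ‖w‖ ≤ R) :
    ∫ x in Metric.ball 0 r, ‖φ (x + n • w) - φ x‖ ∂ν ≤
      n * ∫ x in Metric.ball 0 R, ‖φ (x + w) - φ x‖ ∂ν := by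
  induction n with
  | zero => simp only [zero_smul, add_zero, sub_self, norm_zero, integral_zero, Nat.cast_zero,
      zero_mul, le_refl]
  | succ n ih =>
    push_cast at hr ⊢
    have hint {f : E → G} (hf : Continuous f) :
        IntegrableOn (fun x => ‖f x‖) (Metric.ball 0 r) ν :=
      integrableOn_ball_of_continuous hf.norm 0 r
    calc ∫ x in Metric.ball 0 r, ‖φ (x + (n + 1) • w) - φ x‖ ∂ν
        ≤ ∫ x in Metric.ball 0 r,
            (‖φ (x + n • w) - φ x‖ + ‖φ (x + n • w + w) - φ (x + n • w)‖) ∂ν := by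
          refine setIntegral_mono (hint (by fun_prop))
            ((hint (by fun_prop)).add (hint (by fun_prop))) fun x => ?_
          rw [succ_nsmul, ← add_assoc, add_comm ‖_‖]
          exact norm_sub_le_norm_sub_add_norm_sub _ _ _
      _ = ∫ x in Metric.ball 0 r, ‖φ (x + n • w) - φ x‖ ∂ν +
            ∫ x in Metric.ball 0 r, ‖φ (x + n • w + w) - φ (x + n • w)‖ ∂ν :=
          integral_add (hint (by fun_prop)) (hint (by fun_prop))
      _ ≤ n * ∫ x in Metric.ball 0 R, ‖φ (x + w) - φ x‖ ∂ν +
            ∫ x in Metric.ball 0 R, ‖φ (x + w) - φ x‖ ∂ν := by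
          refine add_le_add (ih (by nlinarith [norm_nonneg w])) ?_
          refine setIntegral_ball_comp_add_le (f := fun x => ‖φ (x + w) - φ x‖) (by fun_prop)
            (fun x => norm_nonneg _) ?_
          linarith [norm_nsmul_le (n := n) (a := w), norm_nonneg w]
      _ = (n + 1) * ∫ x in Metric.ball 0 R, ‖φ (x + w) - φ x‖ ∂ν := by ring

variable [NormedSpace ℝ G]

lemma tendsto_div_succ_nhdsNE_zero {t : ℝ} (ht : 0 < t) :
    Filter.Tendsto (fun n : ℕ => t / (n + 1)) Filter.atTop (nhdsWithin 0 {0}ᶜ) := by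
  refine tendsto_nhdsWithin_iff.2 ⟨?_, .of_forall fun n => (by positivity : t / (n + 1) ≠ 0)⟩
  simpa only [mul_zero, mul_one_div] using
    (tendsto_one_div_add_atTop_nhds_zero_nat (𝕜 := ℝ)).const_mul t

lemma tendsto_setIntegral_norm_slope [FiniteDimensional ℝ G] {φ : E → G} {K : NNReal}
    (hφ : LipschitzWith K φ) (v : E) (R : ℝ) {s : ℕ → ℝ} (hs₀ : ∀ n, 0 < s n)
    (hs : Filter.Tendsto s Filter.atTop (nhdsWithin 0 {0}ᶜ)) :
    Filter.Tendsto (fun n => ∫ x in Metric.ball 0 R, ‖(s n)⁻¹ • (φ (x + s n • v) - φ x)‖ ∂ν)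
      Filter.atTop (nhds (∫ x in Metric.ball 0 R, ‖fderiv ℝ φ x v‖ ∂ν)) := by
  have hφc := hφ.continuous
  refine tendsto_integral_of_dominated_convergence (fun _ => K * ‖v‖)
    (fun n => Continuous.aestronglyMeasurable (by fun_prop))
    (integrableOn_ball_of_continuous continuous_const 0 R) (fun n => .of_forall fun x => ?_) ?_
  · have hLip := hφ.norm_sub_le (x + s n • v) x
    rw [add_sub_cancel_left, norm_smul, Real.norm_of_nonneg (hs₀ n).le] at hLip
    rw [norm_norm, norm_smul, norm_inv, Real.norm_of_nonneg (hs₀ n).le, inv_mul_le_iff₀ (hs₀ n)]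
    linarith
  · filter_upwards [ae_restrict_of_ae (hφ.ae_differentiableAt (μ := ν))] with x hx
    exact ((hx.hasFDerivAt.hasLineDerivAt v).tendsto_slope_zero.comp hs).norm

lemma setIntegral_norm_increment_le_fderiv [FiniteDimensional ℝ G] {φ : E → G} {K : NNReal}
    (hφ : LipschitzWith K φ) {v : E} {r R t : ℝ} (ht : 0 < t) (hr : r + t * ‖v‖ ≤ R) :
    ∫ x in Metric.ball 0 r, ‖φ (x + t • v) - φ x‖ ∂ν ≤
      t * ∫ x in Metric.ball 0 R, ‖fderiv ℝ φ x v‖ ∂ν := by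
  refine ge_of_tendsto' ((tendsto_setIntegral_norm_slope hφ v R (s := fun n => t / (n + 1))
    (fun n => by positivity) (tendsto_div_succ_nhdsNE_zero ht)).const_mul t) fun n => ?_
  have hn : (0 : ℝ) < n + 1 := by positivity
  have hsub : (n + 1) • (t / (n + 1 : ℝ)) • v = t • v := by
    rw [← Nat.cast_smul_eq_nsmul ℝ, smul_smul]
    push_cast
    rw [mul_div_cancel₀ _ hn.ne']
  have hnorm : ((n + 1 : ℕ) : ℝ) * ‖(t / (n + 1 : ℝ)) • v‖ = t * ‖v‖ := by
    rw [norm_smul, Real.norm_of_nonneg (by positivity)]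
    push_cast
    field_simp
  have hstep := setIntegral_norm_increment_nsmul_le (ν := ν) hφ.continuous (n + 1)
    (hnorm ▸ hr : r + (n + 1 : ℕ) * ‖(t / (n + 1 : ℝ)) • v‖ ≤ R)
  rw [hsub] at hstep
  refine hstep.trans_eq ?_
  simp_rw [norm_smul, integral_const_mul]
  rw [norm_inv, Real.norm_of_nonneg (by positivity)]
  push_cast
  field_simp

end Increment

section Linearization

variable {E G A I κ : Type*} [NormedAddCommGroup E] [NormedSpace ℝ E]
  [NormedAddCommGroup G] [NormedSpace ℝ G] [Fintype A] [Fintype I] [Fintype κ]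
  {p q : Seminorm ℝ E} {α : A → ℝ} {β : I → ℝ} {v : A → E} {w : I → E}

lemma exists_seminorm_le_mul_norm [FiniteDimensional ℝ E] (q : Seminorm ℝ E) :
    ∃ K : NNReal, ∀ x, q x ≤ K * ‖x‖ := by
  obtain ⟨K, hK, hq⟩ := q.bound_of_continuous_normedSpace q.convexOn.locallyLipschitz.continuous
  exact ⟨⟨K, hK.le⟩, hq⟩

lemma norm_fderiv_le_seminorm {φ : E → G} {U : Set E} (hU : IsOpen U)
    (hφ : ∀ x ∈ U, ∀ y ∈ U, ‖φ x - φ y‖ ≤ q (x - y)) {x : E} (hx : x ∈ U)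
    (hd : DifferentiableAt ℝ φ x) (w : E) : ‖fderiv ℝ φ x w‖ ≤ q w := by
  have hslope := (hd.hasFDerivAt.hasLineDerivAt w).tendsto_slope_zero.norm
  refine le_of_tendsto hslope ?_
  have hline : Continuous fun s : ℝ => x + s • w := by fun_prop
  have hmem : ∀ᶠ s : ℝ in nhds 0, x + s • w ∈ U :=
    hline.continuousAt.eventually (hU.mem_nhds (by simpa only [zero_smul, add_zero]))
  filter_upwards [nhdsWithin_le_nhds hmem, self_mem_nhdsWithin] with s hs hs₀
  have hs₀ : 0 < ‖s‖ := norm_pos_iff.2 hs₀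
  have hle := hφ _ hs _ hx
  rw [add_sub_cancel_left, map_smul_eq_mul] at hle
  rwa [norm_smul, norm_inv, inv_mul_le_iff₀ hs₀]

lemma sum_mul_norm_apply_le_of_functional
    (h : ∀ ℓ : E →ₗ[ℝ] ℝ, ∑ a, α a * |ℓ (v a)| ≤ ∑ e, β e * |ℓ (w e)|)
    (T : E →ₗ[ℝ] PiLp 1 fun _ : κ => ℝ) :
    ∑ a, α a * ‖T (v a)‖ ≤ ∑ e, β e * ‖T (w e)‖ := by
  simp_rw [PiLp.norm_eq_of_L1, mul_sum]
  rw [sum_comm, sum_comm (s := univ (α := I))]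
  exact sum_le_sum fun k _ => h ((PiLp.projₗ 1 (fun _ : κ => ℝ) k) ∘ₗ T)

section FiniteDimensionalTarget

variable [FiniteDimensional ℝ E] [MeasurableSpace E] [BorelSpace E] {ν : Measure E}
  [ν.IsAddHaarMeasure] {φ : E → PiLp 1 fun _ : κ => ℝ} {K : NNReal} {r R t ε : ℝ}

lemma integrableOn_norm_fderiv_ball [FiniteDimensional ℝ G] {φ : E → G} (hφ : LipschitzWith K φ)
    (w : E) : IntegrableOn (fun x => ‖fderiv ℝ φ x w‖) (Metric.ball 0 R) ν := by
  borelize G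
  refine Measure.integrableOn_of_bounded (M := K * ‖w‖) measure_ball_lt_top.ne
    (measurable_fderiv_apply_const ℝ φ w).norm.aestronglyMeasurable (.of_forall fun x => ?_)
  rw [norm_norm]
  exact ((fderiv ℝ φ x).le_opNorm w).trans (by gcongr; exact norm_fderiv_le_of_lipschitz ℝ hφ)

lemma measureReal_ball_mul_sub_le (hφ : LipschitzWith K φ)
    (hp : ∀ x ∈ Metric.ball 0 R, ∀ y ∈ Metric.ball 0 R, p (x - y) - ε ≤ ‖φ x - φ y‖)
    (ht : 0 < t) {u : E} (hr : r + t * ‖u‖ ≤ R) :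
    ν.real (Metric.ball 0 r) * (t * p u - ε) ≤
      t * ∫ x in Metric.ball 0 R, ‖fderiv ℝ φ x u‖ ∂ν := by
  have hφc := hφ.continuous
  refine le_trans ?_ (setIntegral_norm_increment_le_fderiv (r := r) hφ ht hr)
  rw [← smul_eq_mul, ← setIntegral_const]
  refine setIntegral_mono_on (integrableOn_ball_of_continuous continuous_const 0 r)
    (integrableOn_ball_of_continuous (by fun_prop) 0 r) measurableSet_ball fun x hx => ?_
  rw [mem_ball_zero_iff] at hx
  have hadd : ‖x + t • u‖ < R :=
    (norm_add_le _ _).trans_lt (by rw [norm_smul, Real.norm_of_nonneg ht.le]; linarith)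
  have hle := hp (x + t • u) (mem_ball_zero_iff.2 hadd) x
    (mem_ball_zero_iff.2 (by linarith [mul_nonneg ht.le (norm_nonneg u)]))
  rwa [add_sub_cancel_left, map_smul_eq_mul, Real.norm_of_nonneg ht.le] at hle

lemma setIntegral_sum_norm_fderiv_le (hφ : LipschitzWith K φ)
    (hq : ∀ x ∈ Metric.ball 0 R, ∀ y ∈ Metric.ball 0 R, ‖φ x - φ y‖ ≤ q (x - y))
    (hβ : ∀ e, 0 ≤ β e)
    (h : ∀ ℓ : E →ₗ[ℝ] ℝ, ∑ a, α a * |ℓ (v a)| ≤ ∑ e, β e * |ℓ (w e)|) :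
    ∑ a, α a * ∫ x in Metric.ball 0 R, ‖fderiv ℝ φ x (v a)‖ ∂ν ≤
      ν.real (Metric.ball 0 R) * ∑ e, β e * q (w e) := by
  have hint (a : A) : IntegrableOn (fun x => α a * ‖fderiv ℝ φ x (v a)‖) (Metric.ball 0 R) ν :=
    (integrableOn_norm_fderiv_ball hφ (v a)).const_mul _
  simp_rw [← integral_const_mul]
  rw [← integral_finsetSum _ fun a _ => hint a, ← smul_eq_mul, ← setIntegral_const]
  refine integral_mono_ae (integrable_finsetSum _ fun a _ => hint a)
    (integrableOn_ball_of_continuous continuous_const 0 R) ?_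
  filter_upwards [ae_restrict_of_ae (hφ.ae_differentiableAt (μ := ν)),
    ae_restrict_mem measurableSet_ball] with x hd hx
  refine (sum_mul_norm_apply_le_of_functional h (fderiv ℝ φ x).toLinearMap).trans ?_
  gcongr with e
  · exact hβ e
  · exact norm_fderiv_le_seminorm Metric.isOpen_ball hq hx hd (w e)

lemma measureReal_ball_mul_sum_sub_le (hφ : LipschitzWith K φ)
    (hp : ∀ x ∈ Metric.ball 0 R, ∀ y ∈ Metric.ball 0 R, p (x - y) - ε ≤ ‖φ x - φ y‖)
    (hq : ∀ x ∈ Metric.ball 0 R, ∀ y ∈ Metric.ball 0 R, ‖φ x - φ y‖ ≤ q (x - y))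
    (hα : ∀ a, 0 ≤ α a) (hβ : ∀ e, 0 ≤ β e)
    (h : ∀ ℓ : E →ₗ[ℝ] ℝ, ∑ a, α a * |ℓ (v a)| ≤ ∑ e, β e * |ℓ (w e)|)
    (ht : 0 < t) (hr : ∀ a, r + t * ‖v a‖ ≤ R) :
    ν.real (Metric.ball 0 r) * (t * ∑ a, α a * p (v a) - ε * ∑ a, α a) ≤
      ν.real (Metric.ball 0 R) * (t * ∑ e, β e * q (w e)) := by
  calc ν.real (Metric.ball 0 r) * (t * ∑ a, α a * p (v a) - ε * ∑ a, α a)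
      = ∑ a, α a * (ν.real (Metric.ball 0 r) * (t * p (v a) - ε)) := by
        simp_rw [mul_sum, ← sum_sub_distrib, mul_sum]
        exact sum_congr rfl fun a _ => by ring
    _ ≤ ∑ a, α a * (t * ∫ x in Metric.ball 0 R, ‖fderiv ℝ φ x (v a)‖ ∂ν) :=
        sum_le_sum fun a _ =>
          mul_le_mul_of_nonneg_left (measureReal_ball_mul_sub_le hφ hp ht (hr a)) (hα a)
    _ = t * ∑ a, α a * ∫ x in Metric.ball 0 R, ‖fderiv ℝ φ x (v a)‖ ∂ν := by
        rw [mul_sum]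
        exact sum_congr rfl fun a _ => by ring
    _ ≤ t * (ν.real (Metric.ball 0 R) * ∑ e, β e * q (w e)) := by
        gcongr
        exact setIntegral_sum_norm_fderiv_le hφ hq hβ h
    _ = ν.real (Metric.ball 0 R) * (t * ∑ e, β e * q (w e)) := by ring

end FiniteDimensionalTarget

variable {Ω : Type*} [MeasurableSpace Ω] {ρ : Measure Ω} {R : ℝ}
  [FiniteDimensional ℝ E] {F : E → Lp ℝ 1 ρ}

lemma exists_lipschitzWith_piLp_approx
    (hp : ∀ x ∈ Metric.closedBall 0 R, ∀ y ∈ Metric.closedBall 0 R, p (x - y) ≤ ‖F x - F y‖)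
    (hq : ∀ x ∈ Metric.closedBall 0 R, ∀ y ∈ Metric.closedBall 0 R, ‖F x - F y‖ ≤ q (x - y))
    {ε : ℝ} (hε : 0 < ε) :
    ∃ (κ : Type) (_ : Fintype κ) (φ : E → PiLp 1 fun _ : κ => ℝ) (K : NNReal), LipschitzWith K φ ∧
      (∀ x ∈ Metric.ball 0 R, ∀ y ∈ Metric.ball 0 R, p (x - y) - ε ≤ ‖φ x - φ y‖) ∧
      ∀ x ∈ Metric.ball 0 R, ∀ y ∈ Metric.ball 0 R, ‖φ x - φ y‖ ≤ q (x - y) := by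
  obtain ⟨M, hM⟩ := exists_seminorm_le_mul_norm q
  have hF : LipschitzOnWith M F (Metric.closedBall 0 R) :=
    LipschitzOnWith.of_dist_le_mul fun x hx y hy => by
      simpa only [dist_eq_norm] using (hq x hx y hy).trans (hM _)
  have hdiff : IsCompact ((fun z : E × E => F z.1 - F z.2) ''
      (Metric.closedBall 0 R ×ˢ Metric.closedBall 0 R)) :=
    ((isCompact_closedBall _ _).prod (isCompact_closedBall _ _)).image_of_continuousOn
      ((hF.continuousOn.comp continuousOn_fst fun _ hz => hz.1).sub
        (hF.continuousOn.comp continuousOn_snd fun _ hz => hz.2))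
  obtain ⟨n, h, hh⟩ := exists_levelIntegral_norm_ge hdiff hε
  have hPF : LipschitzOnWith M (levelIntegral h ρ ∘ F) (Metric.closedBall 0 R) :=
    LipschitzOnWith.of_dist_le_mul fun x hx y hy => by
      rw [dist_eq_norm, Function.comp, Function.comp, ← map_sub]
      refine (norm_levelIntegral_le h _).trans ((hq x hx y hy).trans ?_)
      rw [dist_eq_norm]
      exact hM _
  obtain ⟨φ, hφ, hφF⟩ := hPF.extend_finite_dimension
  have hφ_sub {x y : E} (hx : x ∈ Metric.ball 0 R) (hy : y ∈ Metric.ball 0 R) :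
      φ x - φ y = levelIntegral h ρ (F x - F y) := by
    rw [← hφF (Metric.ball_subset_closedBall hx), ← hφF (Metric.ball_subset_closedBall hy), map_sub]
    rfl
  refine ⟨h.range, inferInstance, φ, _, hφ, fun x hx y hy => ?_, fun x hx y hy => ?_⟩ <;>
    rw [hφ_sub hx hy] <;>
    replace hx := Metric.ball_subset_closedBall hx <;>
    replace hy := Metric.ball_subset_closedBall hy
  · linarith [hp x hx y hy, hh _ ⟨(x, y), ⟨hx, hy⟩, rfl⟩]
  · exact (norm_levelIntegral_le h _).trans (hq x hx y hy)

lemma exists_pos_forall_add_mul_le {ι : Type*} [Finite ι] {r : ℝ} (hr : r < R) (x : ι → ℝ) :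
    ∃ t, 0 < t ∧ ∀ i, r + t * x i ≤ R := by
  have hlim : Filter.Tendsto (fun t : ℝ => fun i => r + t * x i) (nhdsWithin 0 (Set.Ioi 0))
      (nhds fun i => r + 0 * x i) :=
    (Continuous.tendsto (by fun_prop) 0).mono_left nhdsWithin_le_nhds
  have hev : ∀ᶠ t in nhdsWithin (0 : ℝ) (Set.Ioi 0), ∀ i, r + t * x i < R :=
    Filter.eventually_all.2 fun i =>
      (tendsto_pi_nhds.1 hlim i).eventually_lt_const (by rwa [zero_mul, add_zero])
  obtain ⟨t, ht, ht₀⟩ := (hev.and self_mem_nhdsWithin).exists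
  exact ⟨t, ht₀, fun i => (ht i).le⟩

lemma pow_finrank_mul_sum_mul_seminorm_le (hR : 0 < R)
    (hp : ∀ x ∈ Metric.closedBall 0 R, ∀ y ∈ Metric.closedBall 0 R, p (x - y) ≤ ‖F x - F y‖)
    (hq : ∀ x ∈ Metric.closedBall 0 R, ∀ y ∈ Metric.closedBall 0 R, ‖F x - F y‖ ≤ q (x - y))
    (hα : ∀ a, 0 ≤ α a) (hβ : ∀ e, 0 ≤ β e)
    (h : ∀ ℓ : E →ₗ[ℝ] ℝ, ∑ a, α a * |ℓ (v a)| ≤ ∑ e, β e * |ℓ (w e)|)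
    {s : ℝ} (hs₀ : 0 < s) (hs₁ : s < 1) :
    s ^ Module.finrank ℝ E * ∑ a, α a * p (v a) ≤ ∑ e, β e * q (w e) := by
  borelize E
  let ν : Measure E := Measure.addHaar
  have hV : 0 < ν.real (Metric.ball 0 R) :=
    ENNReal.toReal_pos (Metric.measure_ball_pos ν 0 hR).ne' measure_ball_lt_top.ne
  have hvol : ν.real (Metric.ball 0 (s * R)) =
      s ^ Module.finrank ℝ E * ν.real (Metric.ball 0 R) := by
    rw [measureReal_def, ν.addHaar_ball_mul_of_pos 0 hs₀, ENNReal.toReal_mul,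
      ENNReal.toReal_ofReal (by positivity), measureReal_def]
  obtain ⟨t, ht, hst⟩ := exists_pos_forall_add_mul_le (mul_lt_of_lt_one_left hR hs₁) (‖v ·‖)
  have hε {ε : ℝ} (hε : 0 < ε) : ν.real (Metric.ball 0 (s * R)) *
      (t * ∑ a, α a * p (v a) - ε * ∑ a, α a) ≤
        ν.real (Metric.ball 0 R) * (t * ∑ e, β e * q (w e)) := by
    obtain ⟨κ, _, φ, K, hφ, hpφ, hqφ⟩ := exists_lipschitzWith_piLp_approx hp hq hε
    exact measureReal_ball_mul_sum_sub_le hφ hpφ hqφ hα hβ h ht hst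
  have hlim : Filter.Tendsto (fun ε : ℝ => ν.real (Metric.ball 0 (s * R)) *
      (t * ∑ a, α a * p (v a) - ε * ∑ a, α a)) (nhdsWithin 0 (Set.Ioi 0))
      (nhds (ν.real (Metric.ball 0 (s * R)) * (t * ∑ a, α a * p (v a) - 0 * ∑ a, α a))) :=
    (Continuous.tendsto (by fun_prop) 0).mono_left nhdsWithin_le_nhds
  have hle := le_of_tendsto hlim (Filter.eventually_of_mem self_mem_nhdsWithin fun ε => hε)
  rw [hvol, zero_mul, sub_zero] at hle
  exact le_of_mul_le_mul_left (by linarith) (mul_pos hV ht)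

/-- Differentiating a finite-dimensional approximation of `F` at almost every point of the ball
replaces `F` by a linear map, which can be tested against functionals coordinatewise. -/
theorem sum_mul_seminorm_le_of_L1_embedding (hR : 0 < R)
    (hp : ∀ x ∈ Metric.closedBall 0 R, ∀ y ∈ Metric.closedBall 0 R, p (x - y) ≤ ‖F x - F y‖)
    (hq : ∀ x ∈ Metric.closedBall 0 R, ∀ y ∈ Metric.closedBall 0 R, ‖F x - F y‖ ≤ q (x - y))
    (hα : ∀ a, 0 ≤ α a) (hβ : ∀ e, 0 ≤ β e)
    (h : ∀ ℓ : E →ₗ[ℝ] ℝ, ∑ a, α a * |ℓ (v a)| ≤ ∑ e, β e * |ℓ (w e)|) :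
    ∑ a, α a * p (v a) ≤ ∑ e, β e * q (w e) := by
  have hlim : Filter.Tendsto (fun s : ℝ => s ^ Module.finrank ℝ E * ∑ a, α a * p (v a))
      (nhdsWithin 1 (Set.Iio 1)) (nhds (1 ^ Module.finrank ℝ E * ∑ a, α a * p (v a))) :=
    (Continuous.tendsto (by fun_prop) 1).mono_left nhdsWithin_le_nhds
  rw [one_pow, one_mul] at hlim
  refine le_of_tendsto hlim ?_
  filter_upwards [nhdsWithin_le_nhds (lt_mem_nhds one_pos), self_mem_nhdsWithin] with s hs₀ hs₁
  exact pow_finrank_mul_sum_mul_seminorm_le hR hp hq hα hβ h hs₀ hs₁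

end Linearization

section TransportationCost

/-- The signed measures of total mass `0` on a finite set, the vector space underlying `TC(X)`. -/
def zeroSum (X : Type*) [Fintype X] : Submodule ℝ (X → ℝ) :=
  LinearMap.ker (Fintype.linearCombination ℝ (1 : X → ℝ))

lemma mem_zeroSum {X : Type*} [Fintype X] {μ : X → ℝ} : μ ∈ zeroSum X ↔ ∑ x, μ x = 0 := by
  simp only [zeroSum, LinearMap.mem_ker, Fintype.linearCombination_apply, Pi.one_apply,
    smul_eq_mul, mul_one]

/-- Integration of `f` against signed measures of total mass `0`. -/
def pairing {X : Type*} [Fintype X] (f : X → ℝ) : zeroSum X →ₗ[ℝ] ℝ :=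
  Fintype.linearCombination ℝ f ∘ₗ (zeroSum X).subtype

/-- The transportation cost norm on signed measures of total mass `0`, by Kantorovich duality. -/
def tcSeminorm (X : Type*) [Fintype X] [PseudoMetricSpace X] : Seminorm ℝ (zeroSum X) :=
  ⨆ f : {f : X → ℝ // LipschitzWith 1 f}, (pairing f.1).toSeminorm

variable {X : Type*} [Fintype X]

lemma pairing_apply (f : X → ℝ) (μ : zeroSum X) : pairing f μ = ∑ x, f x * μ.1 x := by
  simp only [pairing, LinearMap.comp_apply, Submodule.subtype_apply,
    Fintype.linearCombination_apply, smul_eq_mul, mul_comm]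

lemma pairing_sub_const (f : X → ℝ) (c : ℝ) (μ : zeroSum X) :
    pairing (fun x => f x - c) μ = pairing f μ := by
  simp only [pairing_apply, sub_mul, sum_sub_distrib, ← mul_sum, mem_zeroSum.1 μ.2, mul_zero,
    sub_zero]

lemma pairing_indicator_compl (S : Set X) (μ : zeroSum X) :
    pairing (Sᶜ.indicator 1) μ = -pairing (S.indicator 1) μ := by
  simp only [pairing_apply, Set.indicator_compl, Pi.sub_apply, Pi.one_apply, sub_mul, one_mul,
    sum_sub_distrib, mem_zeroSum.1 μ.2, zero_sub]

lemma exists_eq_pairing (ℓ : zeroSum X →ₗ[ℝ] ℝ) : ∃ f : X → ℝ, ℓ = pairing f := by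
  classical
  obtain ⟨L, rfl⟩ := ℓ.exists_extend
  refine ⟨fun x => L (Pi.single x 1), LinearMap.ext fun μ => ?_⟩
  rw [pairing_apply, LinearMap.comp_apply, Submodule.subtype_apply, L.pi_apply_eq_sum_univ]
  refine sum_congr rfl fun x _ => ?_
  rw [smul_eq_mul, mul_comm]
  congr 2
  ext z
  rw [Pi.single_apply]
  exact if_congr eq_comm rfl rfl

section PseudoMetric

variable [PseudoMetricSpace X]

lemma bddAbove_range_abs_pairing (μ : zeroSum X) :
    BddAbove (Set.range fun f : {f : X → ℝ // LipschitzWith 1 f} => |pairing f.1 μ|) := by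
  rcases isEmpty_or_nonempty X with _ | ⟨⟨x₀⟩⟩
  · exact (Set.finite_range _).bddAbove
  · refine ⟨∑ x, dist x x₀ * |μ.1 x|, ?_⟩
    rintro _ ⟨⟨f, hf⟩, rfl⟩
    change |pairing f μ| ≤ _
    rw [← pairing_sub_const f (f x₀), pairing_apply]
    refine (abs_sum_le_sum_abs _ _).trans (sum_le_sum fun x _ => ?_)
    rw [abs_mul]
    gcongr
    simpa only [Real.dist_eq, NNReal.coe_one, one_mul] using hf.dist_le_mul x x₀

lemma tcSeminorm_apply (μ : zeroSum X) :
    tcSeminorm X μ = ⨆ f : {f : X → ℝ // LipschitzWith 1 f}, |pairing f.1 μ| :=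
  Seminorm.iSup_apply (Seminorm.bddAbove_range_iff.2 bddAbove_range_abs_pairing)

lemma abs_pairing_le_tcSeminorm {f : X → ℝ} (hf : LipschitzWith 1 f) (μ : zeroSum X) :
    |pairing f μ| ≤ tcSeminorm X μ := by
  rw [tcSeminorm_apply]
  exact le_ciSup (bddAbove_range_abs_pairing μ) ⟨f, hf⟩

lemma tcSeminorm_le {μ : zeroSum X} {a : ℝ}
    (h : ∀ f : X → ℝ, LipschitzWith 1 f → |pairing f μ| ≤ a) : tcSeminorm X μ ≤ a := by
  rw [tcSeminorm_apply]
  have : Nonempty {f : X → ℝ // LipschitzWith 1 f} := ⟨⟨0, LipschitzWith.const' 0⟩⟩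
  exact ciSup_le fun f => h f.1 f.2

end PseudoMetric

section Dipole

variable {J : Type*} [Fintype J]

open scoped Classical in
/-- The average over `j` of the dipoles `δ_{x j} - δ_{y j}`, that is, the difference of the
empirical measures of the families `x` and `y`. -/
def dipoleMean (x y : J → X) : zeroSum X :=
  ⟨(Fintype.card J : ℝ)⁻¹ • ∑ j, (Pi.single (x j) 1 - Pi.single (y j) 1), by
    refine (zeroSum X).smul_mem _ (sum_mem fun j _ => mem_zeroSum.2 ?_)
    simp only [Pi.sub_apply, sum_sub_distrib, sum_pi_single', mem_univ, if_true, sub_self]⟩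

lemma pairing_dipoleMean (f : X → ℝ) (x y : J → X) :
    pairing f (dipoleMean x y) = (∑ j, (f (x j) - f (y j))) / Fintype.card J := by
  classical
  simp only [pairing, dipoleMean, LinearMap.comp_apply, Submodule.subtype_apply, map_smul, map_sum,
    map_sub, Fintype.linearCombination_apply_single, smul_eq_mul, one_mul]
  rw [div_eq_inv_mul]

/-- The dipole `δ_a - δ_b`. -/
def dipole (a b : X) : zeroSum X := dipoleMean (fun _ : Unit => a) fun _ => b

lemma pairing_dipole (f : X → ℝ) (a b : X) : pairing f (dipole a b) = f a - f b := by
  simp only [dipole, pairing_dipoleMean, univ_unique, sum_const, card_singleton, one_smul,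
    Fintype.card_unit, Nat.cast_one, div_one]

lemma tcSeminorm_dipole_le [PseudoMetricSpace X] (a b : X) : tcSeminorm X (dipole a b) ≤ dist a b :=
  tcSeminorm_le fun f hf => by
    rw [pairing_dipole]
    simpa only [Real.dist_eq, NNReal.coe_one, one_mul] using hf.dist_le_mul a b

end Dipole

section Simplex

/-- The difference of two probability measures, as an element of `TC(X)`. -/
def stdSimplexSub (μ ν : stdSimplex ℝ X) : zeroSum X :=
  ⟨μ.1 - ν.1, mem_zeroSum.2 <| by
    simp only [Pi.sub_apply, sum_sub_distrib, μ.2.2, ν.2.2, sub_self]⟩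

lemma inv_card_add_mem_stdSimplex [Nonempty X] {x : zeroSum X}
    (hx : x ∈ Metric.closedBall 0 (Fintype.card X : ℝ)⁻¹) :
    (fun z => (Fintype.card X : ℝ)⁻¹ + x.1 z) ∈ stdSimplex ℝ X := by
  refine ⟨fun z => ?_, ?_⟩
  · have hz : |x.1 z| ≤ (Fintype.card X : ℝ)⁻¹ :=
      (norm_le_pi_norm x.1 z).trans (mem_closedBall_zero_iff.1 hx)
    linarith [neg_abs_le (x.1 z)]
  · rw [sum_add_distrib, mem_zeroSum.1 x.2, sum_const, card_univ, nsmul_eq_mul, add_zero,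
      mul_inv_cancel₀ (Nat.cast_ne_zero.2 Fintype.card_ne_zero)]

variable [PseudoMetricSpace X] [Nonempty X] {Ω A I : Type*} [MeasurableSpace Ω] {ρ : Measure Ω}
  [Fintype A] [Fintype I] {α : A → ℝ} {β : I → ℝ} {v : A → zeroSum X} {a b : I → X} {C : NNReal}

/-- Near the uniform measure, the simplex of probability measures is a ball of `TC(X)`. -/
theorem sum_mul_tcSeminorm_le_of_emd_embedding {F : stdSimplex ℝ X → Lp ℝ 1 ρ}
    (hF_ge : ∀ μ ν, tcSeminorm X (stdSimplexSub μ ν) ≤ ‖F μ - F ν‖)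
    (hF_le : ∀ μ ν, ‖F μ - F ν‖ ≤ C * tcSeminorm X (stdSimplexSub μ ν))
    (hα : ∀ k, 0 ≤ α k) (hβ : ∀ e, 0 ≤ β e)
    (h : ∀ f : X → ℝ, ∑ k, α k * |pairing f (v k)| ≤ ∑ e, β e * |f (a e) - f (b e)|) :
    ∑ k, α k * tcSeminorm X (v k) ≤ C * ∑ e, β e * dist (a e) (b e) := by
  classical
  let R : ℝ := (Fintype.card X : ℝ)⁻¹
  have hR : 0 < R := inv_pos.2 (Nat.cast_pos.2 Fintype.card_pos)
  let B := Metric.closedBall (0 : zeroSum X) R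
  let Φ : zeroSum X → Lp ℝ 1 ρ := fun x =>
    if hx : x ∈ B then F ⟨_, inv_card_add_mem_stdSimplex hx⟩ else 0
  have hΦ_sub {x y : zeroSum X} (hx : x ∈ B) (hy : y ∈ B) : ∃ μ ν : stdSimplex ℝ X,
      Φ x - Φ y = F μ - F ν ∧ x - y = stdSimplexSub μ ν := by
    refine ⟨⟨_, inv_card_add_mem_stdSimplex hx⟩, ⟨_, inv_card_add_mem_stdSimplex hy⟩, ?_, ?_⟩
    · simp only [Φ, dif_pos hx, dif_pos hy]
    · ext z
      exact (add_sub_add_left_eq_sub _ _ _).symm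
  calc ∑ k, α k * tcSeminorm X (v k)
      ≤ ∑ e, β e * (C • tcSeminorm X) (dipole (a e) (b e)) := by
        refine sum_mul_seminorm_le_of_L1_embedding (F := Φ) hR
          (fun x hx y hy => ?_) (fun x hx y hy => ?_) hα hβ fun ℓ => ?_
        · obtain ⟨μ, ν, hΦ, hμν⟩ := hΦ_sub hx hy
          rw [hΦ, hμν]
          exact hF_ge μ ν
        · obtain ⟨μ, ν, hΦ, hμν⟩ := hΦ_sub hx hy
          rw [hΦ, hμν]
          exact hF_le μ ν
        · obtain ⟨f, rfl⟩ := exists_eq_pairing ℓ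
          simpa only [pairing_dipole] using h f
    _ ≤ ∑ e, β e * (C * dist (a e) (b e)) := by
        gcongr with e
        · exact hβ e
        · exact mul_le_mul_of_nonneg_left (tcSeminorm_dipole_le _ _) C.2
    _ = C * ∑ e, β e * dist (a e) (b e) := by
        rw [mul_sum]
        exact sum_congr rfl fun e _ => mul_left_comm _ _ _

end Simplex

end TransportationCost

section Coarea

lemma setIntegral_indicator_Iic {a b s : ℝ} (has : a ≤ s) (hsb : s ≤ b) :
    ∫ c in Set.Ioc a b, (Set.Iic s).indicator (1 : ℝ → ℝ) c = s - a := by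
  rw [setIntegral_indicator measurableSet_Iic, Set.Ioc_inter_Iic, min_eq_right hsb]
  simp only [Pi.one_apply, setIntegral_const, Real.volume_real_Ioc_of_le has, smul_eq_mul, mul_one]

lemma integrable_indicator_Iic (a b s : ℝ) :
    IntegrableOn ((Set.Iic s).indicator (1 : ℝ → ℝ)) (Set.Ioc a b) :=
  (integrable_const (1 : ℝ)).indicator measurableSet_Iic

lemma setIntegral_abs_indicator_Iic_sub {a b s t : ℝ} (has : a ≤ s) (hsb : s ≤ b) (hat : a ≤ t)
    (htb : t ≤ b) :
    ∫ c in Set.Ioc a b, |(Set.Iic s).indicator (1 : ℝ → ℝ) c - (Set.Iic t).indicator 1 c| =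
      |s - t| := by
  wlog hst : t ≤ s generalizing s t
  · simpa only [abs_sub_comm] using this hat htb has hsb (le_of_not_ge hst)
  have hnonneg (c : ℝ) :
      0 ≤ (Set.Iic s).indicator (1 : ℝ → ℝ) c - (Set.Iic t).indicator 1 c :=
    sub_nonneg.2 (Set.indicator_le_indicator_of_subset (Set.Iic_subset_Iic.2 hst)
      (fun _ => zero_le_one) c)
  simp only [abs_of_nonneg (hnonneg _), abs_of_nonneg (sub_nonneg.2 hst)]
  rw [integral_sub (integrable_indicator_Iic a b s) (integrable_indicator_Iic a b t),
    setIntegral_indicator_Iic has hsb, setIntegral_indicator_Iic hat htb]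
  ring

variable {X A I : Type*} [Fintype X] [Fintype A] [Fintype I] {α : A → ℝ} {β : I → ℝ}
  {v : A → zeroSum X} {a b : I → X}

/-- Both sides of the inequality are integrals over the superlevel sets of `f`. -/
lemma sum_mul_abs_pairing_le_of_indicator (hα : ∀ k, 0 ≤ α k)
    (h : ∀ S : Set X, ∑ k, α k * |pairing (S.indicator 1) (v k)| ≤
      ∑ e, β e * |S.indicator (1 : X → ℝ) (a e) - S.indicator 1 (b e)|) (f : X → ℝ) :
    ∑ k, α k * |pairing f (v k)| ≤ ∑ e, β e * |f (a e) - f (b e)| := by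
  obtain ⟨l, hl⟩ := (Set.finite_range f).bddBelow
  obtain ⟨u, hu⟩ := (Set.finite_range f).bddAbove
  replace hl (x : X) : l ≤ f x := hl ⟨x, rfl⟩
  replace hu (x : X) : f x ≤ u := hu ⟨x, rfl⟩
  let step (c : ℝ) (x : X) : ℝ := {z | c ≤ f z}.indicator 1 x
  have hstep (x : X) : (step · x) = (Set.Iic (f x)).indicator 1 := rfl
  have hint (x : X) : IntegrableOn (step · x) (Set.Ioc l u) := integrable_indicator_Iic l u (f x)
  have hint_sub (x y : X) : IntegrableOn (fun c => |step c x - step c y|) (Set.Ioc l u) :=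
    ((hint x).sub (hint y)).abs
  have hint_pairing (k : A) : IntegrableOn (fun c => pairing (step c) (v k)) (Set.Ioc l u) := by
    simp only [pairing_apply]
    exact integrable_finsetSum _ fun x _ => (hint x).mul_const _
  have hpairing (k : A) : pairing f (v k) = ∫ c in Set.Ioc l u, pairing (step c) (v k) := by
    rw [← pairing_sub_const f l]
    simp only [pairing_apply]
    rw [integral_finsetSum _ fun x _ => (hint x).mul_const _]
    refine sum_congr rfl fun x _ => ?_
    rw [integral_mul_const, hstep, setIntegral_indicator_Iic (hl x) (hu x)]
  calc ∑ k, α k * |pairing f (v k)|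
      ≤ ∑ k, α k * ∫ c in Set.Ioc l u, |pairing (step c) (v k)| := by
        gcongr with k
        · exact hα k
        · rw [hpairing]
          exact abs_integral_le_integral_abs
    _ = ∫ c in Set.Ioc l u, ∑ k, α k * |pairing (step c) (v k)| := by
        rw [integral_finsetSum _ fun k _ => (hint_pairing k).abs.const_mul _]
        exact sum_congr rfl fun k _ => (integral_const_mul _ _).symm
    _ ≤ ∫ c in Set.Ioc l u, ∑ e, β e * |step c (a e) - step c (b e)| :=
        integral_mono (integrable_finsetSum _ fun k _ => (hint_pairing k).abs.const_mul _)
          (integrable_finsetSum _ fun e _ => (hint_sub _ _).const_mul _)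
          fun c => h {z | c ≤ f z}
    _ = ∑ e, β e * |f (a e) - f (b e)| := by
        rw [integral_finsetSum _ fun e _ => (hint_sub _ _).const_mul _]
        refine sum_congr rfl fun e _ => ?_
        rw [integral_const_mul]
        exact congrArg _
          (setIntegral_abs_indicator_Iic_sub (hl (a e)) (hu (a e)) (hl (b e)) (hu (b e)))

end Coarea

section Expectation

open scoped BigOperators

lemma expect_prod {ι κ : Type*} [Fintype ι] [Fintype κ] (g : ι × κ → ℝ) :
    𝔼 p, g p = 𝔼 i, 𝔼 j, g (i, j) := by
  rw [← univ_product_univ, expect_product]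

lemma expect_fst {ι κ : Type*} [Fintype ι] [Fintype κ] [Nonempty κ] (g : ι → ℝ) :
    𝔼 p : ι × κ, g p.1 = 𝔼 i, g i := by
  simp only [expect_prod, Fintype.expect_const]

variable {ι T : Type*} [Fintype ι] [DecidableEq ι] [Fintype T]

lemma expect_expect_update (i : ι) (g : (ι → T) → ℝ) :
    𝔼 ω, 𝔼 t, g (Function.update ω i t) = 𝔼 ω, g ω := by
  rcases isEmpty_or_nonempty T with _ | _
  · have : IsEmpty (ι → T) := ⟨fun ω => isEmptyElim (ω i)⟩
    simp only [univ_eq_empty, expect_empty]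
  have hinv : Function.Involutive fun p : (ι → T) × T => (Function.update p.1 i p.2, p.1 i) :=
    fun p => by simp only [Function.update_idem, Function.update_eq_self, Function.update_self]
  calc 𝔼 ω, 𝔼 t, g (Function.update ω i t)
      = 𝔼 p : (ι → T) × T, g (Function.update p.1 i p.2) := by
        rw [expect_prod]
    _ = 𝔼 p : (ι → T) × T, g p.1 := Fintype.expect_equiv hinv.toPerm _ _ fun _ => rfl
    _ = 𝔼 ω, g ω := expect_fst g

variable [Nonempty T]

lemma expect_pi_apply (i : ι) (g : T → ℝ) : 𝔼 ω : ι → T, g (ω i) = 𝔼 t, g t := by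
  rw [← expect_expect_update i]
  simp only [Function.update_self, Fintype.expect_const]

lemma expect_pi_apply_apply {i j : ι} (hij : i ≠ j) (g : T → T → ℝ) :
    𝔼 ω : ι → T, g (ω i) (ω j) = 𝔼 s, 𝔼 t, g s t := by
  rw [← expect_expect_update i]
  simp only [Function.update_self, Function.update_of_ne hij.symm]
  rw [expect_comm]
  exact expect_congr rfl fun s _ => expect_pi_apply j (g s)

lemma expect_pi_sum_sum (g : T → T → ℝ) :
    𝔼 ω : ι → T, ∑ i, ∑ j, g (ω i) (ω j) =
      Fintype.card ι * 𝔼 t, g t t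
        + Fintype.card ι * (Fintype.card ι - 1) * 𝔼 s, 𝔼 t, g s t := by
  have hrow (i : ι) : 𝔼 ω : ι → T, ∑ j, g (ω i) (ω j) =
      𝔼 t, g t t + (Fintype.card ι - 1) * 𝔼 s, 𝔼 t, g s t := by
    rw [expect_sum_comm, ← add_sum_erase _ _ (mem_univ i), expect_pi_apply i fun t => g t t,
      sum_congr rfl fun j hj => expect_pi_apply_apply (ne_of_mem_erase hj).symm g, sum_const,
      card_erase_of_mem (mem_univ i), card_univ, nsmul_eq_mul,
      Nat.cast_pred (Fintype.card_pos_iff.2 ⟨i⟩)]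
  rw [expect_sum_comm, sum_congr rfl fun i _ => hrow i, sum_const, card_univ, nsmul_eq_mul]
  ring

lemma expect_pi_abs_sum_le (g : T → ℝ) :
    𝔼 ω : ι → T, |∑ i, g (ω i)| ≤ Fintype.card ι * 𝔼 t, |g t| :=
  calc 𝔼 ω : ι → T, |∑ i, g (ω i)| ≤ 𝔼 ω : ι → T, ∑ i, |g (ω i)| :=
        expect_le_expect fun _ _ => abs_sum_le_sum_abs _ _
    _ = Fintype.card ι * 𝔼 t, |g t| := by
        rw [expect_sum_comm, sum_congr rfl fun i _ => expect_pi_apply i fun t => |g t|, sum_const,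
          card_univ, nsmul_eq_mul]

lemma sq_expect_pi_abs_sum_le {g : T → ℝ} (hg : 𝔼 t, g t = 0) :
    (𝔼 ω : ι → T, |∑ i, g (ω i)|) ^ 2 ≤ Fintype.card ι * 𝔼 t, g t ^ 2 :=
  calc (𝔼 ω : ι → T, |∑ i, g (ω i)|) ^ 2 ≤ 𝔼 ω : ι → T, (∑ i, g (ω i)) ^ 2 := by
        simpa only [Pi.one_apply, mul_one, sq_abs, one_pow, Fintype.expect_one] using
          expect_mul_sq_le_sq_mul_sq univ (fun ω : ι → T => |∑ i, g (ω i)|) 1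
    _ = Fintype.card ι * 𝔼 t, g t ^ 2 := by
        simp only [sq, sum_mul_sum]
        rw [expect_pi_sum_sum fun s t => g s * g t, ← Fintype.expect_mul_expect, hg, mul_zero,
          mul_zero, add_zero]

end Expectation

section Poincare

open scoped BigOperators

variable {m L d : ℕ}

/-- The point with offset `o` in the block of length `L` containing `a`. -/
def reblock (hL : L ∣ m) (a : Fin m) (o : Fin L) : Fin m :=
  ⟨a / L * L + o, by
    obtain ⟨c, rfl⟩ := hL
    calc a / L * L + o < a / L * L + L := Nat.add_lt_add_left o.2 _
      _ = L * (a / L + 1) := by ring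
      _ ≤ L * c := Nat.mul_le_mul_left L (Nat.div_lt_of_lt_mul a.2)⟩

/-- The position of `a` within its block of length `L`. -/
def blockOffset (hL : L ∣ m) (a : Fin m) : Fin L :=
  ⟨a % L, Nat.mod_lt _ (Nat.pos_of_dvd_of_pos hL a.pos)⟩

lemma val_orderSucc (a : Fin m) : ((Order.succ a : Fin m) : ℕ) = min (a + 1 : ℕ) (m - 1) := by
  cases m with
  | zero => exact a.elim0
  | succ n =>
    induction a using Fin.lastCases with
    | last => simp
    | cast i => simp

lemma blockOffset_reblock (hL : L ∣ m) (a : Fin m) (o : Fin L) :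
    blockOffset hL (reblock hL a o) = o :=
  Fin.ext <| by
    simp only [blockOffset, reblock, Nat.mul_add_mod_self_right, Nat.mod_eq_of_lt o.2]

lemma reblock_blockOffset (hL : L ∣ m) (a : Fin m) : reblock hL a (blockOffset hL a) = a :=
  Fin.ext <| Nat.div_add_mod' _ _

lemma reblock_reblock (hL : L ∣ m) (a : Fin m) (o o' : Fin L) :
    reblock hL (reblock hL a o) o' = reblock hL a o' :=
  Fin.ext <| by
    simp only [reblock]
    rw [mul_comm (a / L : ℕ) L, Nat.mul_add_div o.pos, Nat.div_eq_of_lt o.2, add_zero,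
      mul_comm (a / L : ℕ) L]

lemma reblock_dvd_refl (a o : Fin m) : reblock (dvd_refl m) a o = o :=
  Fin.ext <| by simp only [reblock, Nat.div_eq_of_lt a.2, zero_mul, zero_add]

lemma abs_sub_reblock_le (hL : L ∣ m) (u : Fin m → ℝ) (a : Fin m) (o : Fin L) :
    |u a - u (reblock hL a o)| ≤
      ∑ o', |u (Order.succ (reblock hL a o')) - u (reblock hL a o')| := by
  let g (j : ℕ) : ℝ := u ⟨min (a / L * L + j) (m - 1), by have := a.2; omega⟩
  have hg (o' : Fin L) : g o' = u (reblock hL a o') := by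
    have := (reblock hL a o').2
    simp only [reblock] at this
    simp only [g, reblock]
    congr 2
    omega
  have hg_succ (o' : Fin L) : g (o' + 1) = u (Order.succ (reblock hL a o')) :=
    congrArg u (Fin.ext (val_orderSucc (reblock hL a o')).symm)
  have hchain {r s : ℕ} (hr : r < L) (hs : s < L) :
      |g r - g s| ≤ ∑ j ∈ range L, |g (j + 1) - g j| := by
    wlog hrs : r ≤ s generalizing r s
    · rw [abs_sub_comm]
      exact this hs hr (le_of_not_ge hrs)
    calc |g r - g s| ≤ ∑ j ∈ Ico r s, |g (j + 1) - g j| := by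
          simpa only [Real.dist_eq, abs_sub_comm] using dist_le_Ico_sum_dist g hrs
      _ ≤ ∑ j ∈ range L, |g (j + 1) - g j| :=
          sum_le_sum_of_subset_of_nonneg (fun j hj => mem_range.2 ((mem_Ico.1 hj).2.trans hs))
            fun _ _ _ => abs_nonneg _
  have h := hchain (blockOffset hL a).2 o.2
  rw [← Fin.sum_univ_eq_sum_range fun j => |g (j + 1) - g j|] at h
  simpa only [hg, hg_succ, reblock_blockOffset] using h

lemma abs_sub_le_sum_orderSucc (u : Fin m → ℝ) (a b : Fin m) :
    |u a - u b| ≤ ∑ c, |u (Order.succ c) - u c| := by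
  simpa only [reblock_dvd_refl] using abs_sub_reblock_le (dvd_refl m) u a b

/-- Replace the offsets of the coordinates of `p.1` in `s` by those of `p.2`, and conversely. -/
def swapOffsets (hL : L ∣ m) (s : Finset (Fin d)) (p : GPt m d × GPt L d) : GPt m d × GPt L d :=
  (s.piecewise (fun i => reblock hL (p.1 i) (p.2 i)) p.1,
    s.piecewise (fun i => blockOffset hL (p.1 i)) p.2)

lemma swapOffsets_involutive (hL : L ∣ m) (s : Finset (Fin d)) :
    Function.Involutive (swapOffsets hL s) := fun p => by
  ext i : 2 <;> by_cases hi : i ∈ s <;>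
    simp only [swapOffsets, piecewise_eq_of_mem, piecewise_eq_of_notMem, hi, reblock_reblock,
      reblock_blockOffset, blockOffset_reblock, not_false_eq_true]

lemma expect_swapOffsets (hL : L ∣ m) (s : Finset (Fin d)) (g : GPt m d × GPt L d → ℝ) :
    𝔼 p, g (swapOffsets hL s p) = 𝔼 p, g p :=
  Fintype.expect_equiv (swapOffsets_involutive hL s).toPerm _ _ fun _ => rfl

/-- The neighbour of `x` one step up along the axis `i` (or `x` itself at the boundary). -/
def gridNext (i : Fin d) (x : GPt m d) : GPt m d := Function.update x i (Order.succ (x i))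

variable [NeZero L]

lemma expect_expect_reblock (hL : L ∣ m) (u : Fin m → ℝ) :
    𝔼 a, 𝔼 o, u (reblock hL a o) = 𝔼 a, u a := by
  have hinv : Function.Involutive fun p : Fin m × Fin L =>
      (reblock hL p.1 p.2, blockOffset hL p.1) :=
    fun p => by simp only [reblock_reblock, reblock_blockOffset, blockOffset_reblock]
  calc 𝔼 a, 𝔼 o, u (reblock hL a o) = 𝔼 p : Fin m × Fin L, u (reblock hL p.1 p.2) := by
        rw [expect_prod]
    _ = 𝔼 p : Fin m × Fin L, u p.1 := Fintype.expect_equiv hinv.toPerm _ _ fun _ => rfl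
    _ = 𝔼 a, u a := expect_fst u

lemma expect_abs_sub_reblock_le (hL : L ∣ m) (u : Fin m → ℝ) :
    𝔼 a, 𝔼 o, |u a - u (reblock hL a o)| ≤ L * 𝔼 a, |u (Order.succ a) - u a| :=
  calc 𝔼 a, 𝔼 o, |u a - u (reblock hL a o)|
      ≤ 𝔼 a, 𝔼 _o : Fin L, ∑ o, |u (Order.succ (reblock hL a o)) - u (reblock hL a o)| :=
        expect_le_expect fun a _ => expect_le_expect fun o _ => abs_sub_reblock_le hL u a o
    _ = L * 𝔼 a, 𝔼 o, |u (Order.succ (reblock hL a o)) - u (reblock hL a o)| := by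
        simp only [Fintype.expect_const, mul_expect]
        refine expect_congr rfl fun a _ => ?_
        rw [← mul_expect, ← Fintype.card_mul_expect, Fintype.card_fin]
    _ = L * 𝔼 a, |u (Order.succ a) - u a| := by
        rw [expect_expect_reblock hL fun a => |u (Order.succ a) - u a|]

lemma expect_abs_sub_update_le (hL : L ∣ m) (h : GPt m d → ℝ) (i : Fin d) :
    𝔼 p : GPt m d × GPt L d,
        |h p.1 - h (Function.update p.1 i (reblock hL (p.1 i) (p.2 i)))| ≤
      L * 𝔼 x, |h (gridNext i x) - h x| :=
  calc 𝔼 p : GPt m d × GPt L d, |h p.1 - h (Function.update p.1 i (reblock hL (p.1 i) (p.2 i)))|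
      = 𝔼 x, 𝔼 o, |h x - h (Function.update x i (reblock hL (x i) o))| := by
        rw [expect_prod]
        exact expect_congr rfl fun x _ =>
          expect_pi_apply i fun o => |h x - h (Function.update x i (reblock hL (x i) o))|
    _ = 𝔼 x, 𝔼 a, 𝔼 o,
          |h (Function.update x i a) - h (Function.update x i (reblock hL a o))| := by
        rw [← expect_expect_update i]
        simp only [Function.update_idem, Function.update_self]
    _ ≤ 𝔼 x, L * 𝔼 a, |h (Function.update x i (Order.succ a)) - h (Function.update x i a)| :=
        expect_le_expect fun x _ =>
          expect_abs_sub_reblock_le hL fun a => h (Function.update x i a)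
    _ = L * 𝔼 x, |h (gridNext i x) - h x| := by
        rw [← mul_expect, ← expect_expect_update i fun x => |h (gridNext i x) - h x|]
        simp only [gridNext, Function.update_idem, Function.update_self]

lemma expect_abs_sub_swapOffsets_le (hL : L ∣ m) (h : GPt m d → ℝ) (s : Finset (Fin d)) :
    𝔼 p, |h p.1 - h (swapOffsets hL s p).1| ≤ L * ∑ i ∈ s, 𝔼 x, |h (gridNext i x) - h x| := by
  induction s using Finset.induction_on with
  | empty => simp [swapOffsets]
  | insert i s hi ih =>
    have hstep (p : GPt m d × GPt L d) : (swapOffsets hL (insert i s) p).1 =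
        Function.update (swapOffsets hL s p).1 i
          (reblock hL ((swapOffsets hL s p).1 i) ((swapOffsets hL s p).2 i)) := by
      simp only [swapOffsets, piecewise_insert, piecewise_eq_of_notMem _ _ _ hi]
    calc 𝔼 p, |h p.1 - h (swapOffsets hL (insert i s) p).1|
        ≤ 𝔼 p, (|h p.1 - h (swapOffsets hL s p).1| +
            |h (swapOffsets hL s p).1 - h (swapOffsets hL (insert i s) p).1|) :=
          expect_le_expect fun _ _ => abs_sub_le _ _ _
      _ = 𝔼 p, |h p.1 - h (swapOffsets hL s p).1| + 𝔼 p : GPt m d × GPt L d,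
            |h p.1 - h (Function.update p.1 i (reblock hL (p.1 i) (p.2 i)))| := by
          rw [expect_add_distrib]
          simp only [hstep]
          rw [expect_swapOffsets hL s fun p =>
            |h p.1 - h (Function.update p.1 i (reblock hL (p.1 i) (p.2 i)))|]
      _ ≤ L * ∑ j ∈ insert i s, 𝔼 x, |h (gridNext j x) - h x| := by
          rw [sum_insert hi, mul_add, add_comm]
          exact add_le_add (expect_abs_sub_update_le hL h i) ih

end Poincare

section Isoperimetry

open scoped BigOperators

lemma mul_log_add_log_le {w r c s : ℝ} (hw : 0 < w) (hr : 0 < r) (hc : 0 < c) (hs : 0 < s) :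
    w * (Real.log r + Real.log c) ≤ w * Real.log w + w * Real.log s + (r * c / s - w) := by
  have hlog := Real.log_le_sub_one_of_pos (x := r * c / (w * s)) (by positivity)
  rw [Real.log_div (by positivity) (by positivity), Real.log_mul hr.ne' hc.ne',
    Real.log_mul hw.ne' hs.ne'] at hlog
  calc w * (Real.log r + Real.log c)
      ≤ w * (Real.log w + Real.log s + (r * c / (w * s) - 1)) :=
        mul_le_mul_of_nonneg_left (by linarith) hw.le
    _ = w * Real.log w + w * Real.log s + (r * c / s - w) := by field_simp

lemma expect_mul_log_expect_add_le {A Y : Type*} [Fintype A] [Fintype Y] {w : A → Y → ℝ}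
    (hw : ∀ a y, 0 ≤ w a y) :
    𝔼 a, 𝔼 y, w a y * (Real.log (𝔼 y', w a y') + Real.log (𝔼 a', w a' y)) ≤
      𝔼 a, 𝔼 y, w a y * Real.log (w a y) + (𝔼 a, 𝔼 y, w a y) * Real.log (𝔼 a, 𝔼 y, w a y) := by
  set r : A → ℝ := fun a => 𝔼 y, w a y with hr
  set c : Y → ℝ := fun y => 𝔼 a, w a y
  set s : ℝ := 𝔼 a, r a with hs
  have hr_nonneg (a : A) : 0 ≤ r a := expect_nonneg fun y _ => hw a y
  have hc_nonneg (y : Y) : 0 ≤ c y := expect_nonneg fun a _ => hw a y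
  have hs_nonneg : 0 ≤ s := expect_nonneg fun a _ => hr_nonneg a
  have hpointwise (a : A) (y : Y) : w a y * (Real.log (r a) + Real.log (c y)) ≤
      w a y * Real.log (w a y) + w a y * Real.log s + (r a * c y / s - w a y) := by
    rcases (hw a y).eq_or_lt with h | hpos
    · simp only [← h, zero_mul, zero_add, sub_zero]
      exact div_nonneg (mul_nonneg (hr_nonneg a) (hc_nonneg y)) hs_nonneg
    · have hra : 0 < r a := expect_pos' (fun y _ => hw a y) ⟨y, mem_univ y, hpos⟩
      have hcy : 0 < c y := expect_pos' (fun a _ => hw a y) ⟨a, mem_univ a, hpos⟩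
      have hs_pos : 0 < s := expect_pos' (fun a _ => hr_nonneg a) ⟨a, mem_univ a, hra⟩
      exact mul_log_add_log_le hpos hra hcy hs_pos
  have hproduct : 𝔼 a, 𝔼 y, r a * c y / s = s := by
    have hcs : 𝔼 y, c y = s := expect_comm _ _ _
    simp only [← expect_div, ← Fintype.expect_mul_expect]
    rw [hcs, ← hs, mul_self_div_self]
  calc 𝔼 a, 𝔼 y, w a y * (Real.log (r a) + Real.log (c y))
      ≤ 𝔼 a, 𝔼 y,
          (w a y * Real.log (w a y) + w a y * Real.log s + (r a * c y / s - w a y)) :=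
        expect_le_expect fun a _ => expect_le_expect fun y _ => hpointwise a y
    _ = 𝔼 a, 𝔼 y, w a y * Real.log (w a y) + s * Real.log s := by
        simp only [expect_add_distrib, expect_sub_distrib, hproduct, ← expect_mul]
        rw [← hr, ← hs, sub_self, add_zero]

lemma sum_expect_mul_log_expect_update_le {A : Type*} [Fintype A] (d : ℕ) {w : (Fin d → A) → ℝ}
    (hw : ∀ x, 0 ≤ w x) :
    ∑ i, 𝔼 x, w x * Real.log (𝔼 a, w (Function.update x i a)) ≤
      (d - 1) * 𝔼 x, w x * Real.log (w x) + (𝔼 x, w x) * Real.log (𝔼 x, w x) := by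
  induction d with
  | zero => simp
  | succ d ih =>
    have hcons (g : (Fin (d + 1) → A) → ℝ) : 𝔼 x, g x = 𝔼 a, 𝔼 y, g (Fin.cons a y) := by
      rw [← expect_prod fun p : A × (Fin d → A) => g (Fin.cons p.1 p.2)]
      exact (Fintype.expect_equiv (Fin.consEquiv fun _ => A) _ _ fun _ => rfl).symm
    have hsplit := expect_mul_log_expect_add_le fun a y => hw (Fin.cons a y)
    have hslices := expect_le_expect (s := univ) fun a _ => ih fun y => hw (Fin.cons a y)
    simp only [mul_add, expect_add_distrib, ← expect_mul, ← mul_expect] at hsplit hslices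
    rw [expect_sum_comm] at hslices
    simp only [Fin.sum_univ_succ, hcons, Fin.update_cons_zero, ← Fin.cons_update]
    push_cast
    linarith

variable {m d : ℕ}

lemma expect_indicator_mul_inv_sub_one_le (T : Set (Fin m)) :
    𝔼 a, T.indicator 1 a * ((𝔼 b, T.indicator (1 : Fin m → ℝ) b)⁻¹ - 1) ≤
      m * 𝔼 a, |T.indicator (1 : Fin m → ℝ) (Order.succ a) - T.indicator 1 a| := by
  set φ : ℝ := 𝔼 b, T.indicator (1 : Fin m → ℝ) b with hφ_def
  have hφ : 0 ≤ φ := expect_nonneg fun b _ => Set.indicator_nonneg (fun _ _ => zero_le_one) b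
  have hsum : (m : ℝ) * 𝔼 a, |T.indicator (1 : Fin m → ℝ) (Order.succ a) - T.indicator 1 a| =
      ∑ a, |T.indicator (1 : Fin m → ℝ) (Order.succ a) - T.indicator 1 a| := by
    rw [← Fintype.card_mul_expect, Fintype.card_fin]
  rw [← expect_mul, ← hφ_def, hsum]
  by_cases htrivial : φ = 0 ∨ φ = 1
  · calc φ * (φ⁻¹ - 1) = 0 := by
          rcases htrivial with h | h <;> simp only [h, zero_mul, inv_one, sub_self, mul_zero]
      _ ≤ _ := sum_nonneg fun _ _ => abs_nonneg _
  push Not at htrivial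
  obtain ⟨a, ha⟩ : T.Nonempty := by
    by_contra! h
    simp [hφ_def, h] at htrivial
  obtain ⟨b, hb⟩ : ∃ b, b ∉ T := by
    by_contra! h
    have : Nonempty (Fin m) := ⟨a⟩
    simp [hφ_def, Set.eq_univ_of_forall h] at htrivial
  calc φ * (φ⁻¹ - 1) ≤ 1 := by linarith [mul_inv_le_one (a := φ)]
    _ = |T.indicator (1 : Fin m → ℝ) a - T.indicator 1 b| := by
        simp only [Set.indicator_of_mem ha, Set.indicator_of_notMem hb, Pi.one_apply, sub_zero,
          abs_one]
    _ ≤ _ := abs_sub_le_sum_orderSucc _ a b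

lemma expect_indicator_mul_inv_expect_update_sub_one_le (S : Set (GPt m d)) (i : Fin d) :
    𝔼 x, S.indicator 1 x * ((𝔼 a, S.indicator (1 : GPt m d → ℝ) (Function.update x i a))⁻¹ - 1) ≤
      m * 𝔼 x, |S.indicator (1 : GPt m d → ℝ) (gridNext i x) - S.indicator 1 x| := by
  rw [← expect_expect_update i,
    ← expect_expect_update i fun x =>
      |S.indicator (1 : GPt m d → ℝ) (gridNext i x) - S.indicator 1 x|, mul_expect]
  refine expect_le_expect fun x _ => ?_
  simp only [gridNext, Function.update_idem, Function.update_self]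
  exact expect_indicator_mul_inv_sub_one_le (Function.update x i ⁻¹' S)

lemma mul_one_sub_log_sub_mul_log_le {q y : ℝ} (hq : 0 < q) (hy : 0 < y) :
    q * (1 - Real.log q) - 1 - q * Real.log y ≤ y⁻¹ - 1 := by
  have hlog := Real.log_le_sub_one_of_pos (x := (q * y)⁻¹) (by positivity)
  rw [Real.log_inv, Real.log_mul hq.ne' hy.ne', mul_inv] at hlog
  have h := mul_le_mul_of_nonneg_left hlog hq.le
  rw [mul_sub_one, mul_inv_cancel_left₀ hq.ne'] at h
  linarith

/-- On average over `S`, entropy bounds the logarithms of the line densities of `S`, and each line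
that meets both `S` and its complement carries a boundary edge. -/
theorem mul_expect_indicator_mul_sub_one_le (S : Set (GPt m d)) {q : ℝ} (hq : 0 < q)
    (hqS : q ^ d * 𝔼 x, S.indicator (1 : GPt m d → ℝ) x = 1) :
    d * (𝔼 x, S.indicator (1 : GPt m d → ℝ) x) * (q - 1) ≤
      m * ∑ i, 𝔼 x, |S.indicator (1 : GPt m d → ℝ) (gridNext i x) - S.indicator 1 x| := by
  set w : GPt m d → ℝ := S.indicator 1 with hw_def
  set s : ℝ := 𝔼 x, w x with hs
  let φ (i : Fin d) (x : GPt m d) : ℝ := 𝔼 a, w (Function.update x i a)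
  have hw (x : GPt m d) : 0 ≤ w x := Set.indicator_nonneg (fun _ _ => zero_le_one) x
  have hw_log (x : GPt m d) : w x * Real.log (w x) = 0 := by
    by_cases hx : x ∈ S <;> simp [hw_def, hx]
  have hlog_s : Real.log s = -(d * Real.log q) := by
    rw [eq_inv_of_mul_eq_one_right hqS, Real.log_inv, Real.log_pow]
  have hentropy : ∑ i, 𝔼 x, w x * Real.log (φ i x) ≤ -(s * (d * Real.log q)) := by
    have h := sum_expect_mul_log_expect_update_le d hw
    simp only [hw_log, expect_const_zero, mul_zero, zero_add] at h
    rwa [← hs, hlog_s, mul_neg] at h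
  have hpointwise (i : Fin d) (x : GPt m d) :
      w x * (q * (1 - Real.log q) - 1) - q * (w x * Real.log (φ i x)) ≤
        w x * ((φ i x)⁻¹ - 1) := by
    rcases (hw x).eq_or_lt with h | hpos
    · simp only [← h, zero_mul, mul_zero, sub_zero, le_refl]
    · have hφ : 0 < φ i x := expect_pos' (fun a _ => hw _)
        ⟨x i, mem_univ _, by rwa [Function.update_eq_self]⟩
      have h := mul_le_mul_of_nonneg_left (mul_one_sub_log_sub_mul_log_le hq hφ) hpos.le
      linarith
  calc d * s * (q - 1)
      ≤ d * (s * (q * (1 - Real.log q) - 1)) - q * ∑ i, 𝔼 x, w x * Real.log (φ i x) := by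
        nlinarith [mul_le_mul_of_nonneg_left hentropy hq.le]
    _ = ∑ i, 𝔼 x, (w x * (q * (1 - Real.log q) - 1) - q * (w x * Real.log (φ i x))) := by
        simp only [expect_sub_distrib, ← expect_mul, ← mul_expect, sum_sub_distrib, ← mul_sum,
          sum_const, card_univ, Fintype.card_fin, nsmul_eq_mul, hs]
        ring
    _ ≤ ∑ i, 𝔼 x, w x * ((φ i x)⁻¹ - 1) :=
        sum_le_sum fun i _ => expect_le_expect fun x _ => hpointwise i x
    _ ≤ m * ∑ i, 𝔼 x, |w (gridNext i x) - w x| := by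
        rw [mul_sum]
        exact sum_le_sum fun i _ => expect_indicator_mul_inv_expect_update_sub_one_le S i

end Isoperimetry

section OneScale

open scoped BigOperators

variable {m L d : ℕ} {J : Type*} [Fintype J]

/-- The average of the dipoles that move each sample `(ω j).1` to the point of the same block whose
offsets are `(ω j).2`. -/
def resampleDipole (hL : L ∣ m) (ω : J → GPt m d × GPt L d) : zeroSum (GPt m d) :=
  dipoleMean (fun j => (ω j).1) fun j => (swapOffsets hL univ (ω j)).1

lemma expect_abs_pairing_resampleDipole [DecidableEq J] (hL : L ∣ m) (f : GPt m d → ℝ) :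
    𝔼 ω : J → GPt m d × GPt L d, |pairing f (resampleDipole hL ω)| =
      (𝔼 ω : J → GPt m d × GPt L d, |∑ j, (f (ω j).1 - f (swapOffsets hL univ (ω j)).1)|) /
        Fintype.card J := by
  simp only [resampleDipole, pairing_dipoleMean, abs_div, Nat.abs_cast, expect_div]

variable [NeZero m] [NeZero L] [DecidableEq J] [Nonempty J]

lemma expect_abs_pairing_resampleDipole_indicator_le (hL : L ∣ m) (S : Set (GPt m d)) :
    𝔼 ω : J → GPt m d × GPt L d, |pairing (S.indicator 1) (resampleDipole hL ω)| ≤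
      2 * 𝔼 x, S.indicator (1 : GPt m d → ℝ) x := by
  let h : GPt m d → ℝ := S.indicator 1
  have hh (x : GPt m d) : 0 ≤ h x := Set.indicator_nonneg (fun _ _ => zero_le_one) x
  rw [expect_abs_pairing_resampleDipole, div_le_iff₀ (Nat.cast_pos.2 Fintype.card_pos), mul_comm]
  calc 𝔼 ω : J → GPt m d × GPt L d, |∑ j, (h (ω j).1 - h (swapOffsets hL univ (ω j)).1)|
      ≤ Fintype.card J * 𝔼 p : GPt m d × GPt L d, |h p.1 - h (swapOffsets hL univ p).1| :=
        expect_pi_abs_sum_le fun p : GPt m d × GPt L d => h p.1 - h (swapOffsets hL univ p).1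
    _ ≤ Fintype.card J * 𝔼 p : GPt m d × GPt L d, (h p.1 + h (swapOffsets hL univ p).1) := by
        refine mul_le_mul_of_nonneg_left (expect_le_expect fun p _ => ?_) (Nat.cast_nonneg _)
        have h₁ := hh p.1
        have h₂ := hh (swapOffsets hL univ p).1
        exact abs_sub_le_iff.2 ⟨by linarith, by linarith⟩
    _ = Fintype.card J * (2 * 𝔼 x, h x) := by
        rw [expect_add_distrib, expect_swapOffsets hL univ fun p => h p.1, expect_fst, two_mul]

lemma sq_expect_abs_pairing_resampleDipole_indicator_le (hL : L ∣ m) (S : Set (GPt m d)) :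
    (𝔼 ω : J → GPt m d × GPt L d, |pairing (S.indicator 1) (resampleDipole hL ω)|) ^ 2 ≤
      L * (∑ i, 𝔼 x, |S.indicator (1 : GPt m d → ℝ) (gridNext i x) - S.indicator 1 x|) /
        Fintype.card J := by
  let h : GPt m d → ℝ := S.indicator 1
  let g (p : GPt m d × GPt L d) : ℝ := h p.1 - h (swapOffsets hL univ p).1
  have hg_expect : 𝔼 p, g p = 0 := by
    rw [expect_sub_distrib, expect_swapOffsets hL univ fun p => h p.1, sub_self]
  have hg_sq (p : GPt m d × GPt L d) : g p ^ 2 = |g p| := by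
    by_cases h₁ : p.1 ∈ S <;> by_cases h₂ : (swapOffsets hL univ p).1 ∈ S <;>
      simp [g, h, h₁, h₂]
  have hcard : (0 : ℝ) < Fintype.card J := Nat.cast_pos.2 Fintype.card_pos
  rw [expect_abs_pairing_resampleDipole, div_pow, div_le_div_iff₀ (pow_pos hcard 2) hcard]
  calc (𝔼 ω : J → GPt m d × GPt L d, |∑ j, g (ω j)|) ^ 2 * Fintype.card J
      ≤ Fintype.card J * (𝔼 p, g p ^ 2) * Fintype.card J := by
        gcongr
        exact sq_expect_pi_abs_sum_le hg_expect
    _ ≤ Fintype.card J * (L * ∑ i, 𝔼 x, |h (gridNext i x) - h x|) * Fintype.card J := by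
        simp only [hg_sq]
        gcongr
        exact expect_abs_sub_swapOffsets_le hL h univ
    _ = _ := by ring

end OneScale

section Scales

lemma sum_le_div_one_sub {α : Type*} [LinearOrder α] {u : α → ℝ} {r : ℝ} (hr₀ : 0 ≤ r)
    (hr₁ : r < 1) (hu : ∀ a b, a < b → u b ≤ r * u a) (s : Finset α) {B : ℝ} (hB : 0 ≤ B)
    (hs : ∀ k ∈ s, u k ≤ B) : ∑ k ∈ s, u k ≤ B / (1 - r) := by
  have h1r : 0 < 1 - r := sub_pos.2 hr₁
  induction s using Finset.induction_on_min generalizing B with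
  | empty => exact div_nonneg hB h1r.le
  | insert a s ha ih =>
    have hua : u a ≤ B := hs a (mem_insert_self a s)
    have htail : ∑ k ∈ s, u k ≤ r * B / (1 - r) := ih (mul_nonneg hr₀ hB) fun k hk =>
      (hu a k (ha k hk)).trans (mul_le_mul_of_nonneg_left hua hr₀)
    calc ∑ k ∈ insert a s, u k = u a + ∑ k ∈ s, u k := sum_insert fun h => (ha a h).false
      _ ≤ B + r * B / (1 - r) := add_le_add hua htail
      _ = B / (1 - r) := by
        field_simp
        ring

lemma sum_mul_two_pow_le {c B : ℝ} (hc : 0 ≤ c) (hB : 0 ≤ B) {t : Finset ℕ}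
    (h : ∀ j ∈ t, c * 2 ^ j ≤ B) : ∑ j ∈ t, c * 2 ^ j ≤ 2 * B := by
  have hdual := sum_le_div_one_sub (α := ℕᵒᵈ) (u := fun j => c * 2 ^ OrderDual.ofDual j)
    (r := 1 / 2) (by norm_num) (by norm_num) (fun a b hab => ?_)
    (t.map OrderDual.toDual.toEmbedding) hB fun j hj => h j.ofDual (by simpa using hj)
  · rw [sum_map] at hdual
    exact hdual.trans_eq (by ring)
  · have hpow : (2 : ℝ) ^ (OrderDual.ofDual b + 1) ≤ 2 ^ OrderDual.ofDual a :=
      pow_le_pow_right₀ one_le_two hab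
    rw [pow_succ] at hpow
    nlinarith

lemma sum_sqrt_div_two_pow_le {e : ℕ} (he : e ≠ 0) {y B : ℝ} (hy : 0 ≤ y) (hB : 0 ≤ B)
    {t : Finset ℕ} (h : ∀ j ∈ t, √(y / (2 ^ j) ^ e) ≤ B) :
    ∑ j ∈ t, √(y / (2 ^ j) ^ e) ≤ 4 * B := by
  refine (sum_le_div_one_sub (r := 3 / 4) (by norm_num) (by norm_num) (fun a b hab => ?_) t hB
    h).trans_eq (by ring)
  have hpow : 2 * ((2 : ℝ) ^ a) ^ e ≤ (2 ^ b) ^ e :=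
    calc 2 * ((2 : ℝ) ^ a) ^ e ≤ 2 ^ e * (2 ^ a) ^ e := by
          gcongr
          exact le_self_pow₀ one_le_two he
      _ = (2 ^ (a + 1)) ^ e := by rw [← mul_pow, pow_succ']
      _ ≤ (2 ^ b) ^ e := by
          gcongr
          · exact one_le_two
          · exact hab
  rw [Real.sqrt_le_left (by positivity), mul_pow, Real.sq_sqrt (by positivity)]
  calc y / (2 ^ b) ^ e ≤ y / (2 * (2 ^ a) ^ e) := by gcongr
    _ = 1 / 2 * (y / (2 ^ a) ^ e) := by ring
    _ ≤ (3 / 4) ^ 2 * (y / (2 ^ a) ^ e) := by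
        gcongr
        norm_num

lemma log_four_mul_sq_le {d : ℝ} (hd : 0 < d) : Real.log (4 * d ^ 2) ≤ d / 12 + 8 := by
  have hlog_ratio := Real.log_le_sub_one_of_pos (show 0 < d / 24 by positivity)
  have hlog_64 : Real.log ((2 : ℝ) ^ 6) = 6 * Real.log 2 := by
    rw [Real.log_pow, Nat.cast_ofNat]
  calc Real.log (4 * d ^ 2) ≤ Real.log ((d / 24 * 2 ^ 6) ^ 2) :=
        Real.log_le_log (by positivity) (by nlinarith [sq_nonneg d])
    _ = 2 * (Real.log (d / 24) + Real.log ((2 : ℝ) ^ 6)) := by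
        rw [Real.log_pow, Real.log_mul (by positivity) (by positivity), Nat.cast_ofNat]
    _ ≤ d / 12 + 8 := by
        rw [hlog_64]
        linarith [Real.log_two_lt_d9]

lemma half_le_mul_log_of_pow_mul_eq_one {d : ℕ} {q s : ℝ} (hq : 0 < q) (hqs : q ^ d * s = 1)
    (hs : s ≤ 1 / 2) : 1 / 2 ≤ d * Real.log q := by
  have hs_inv : s = (q ^ d)⁻¹ := eq_inv_of_mul_eq_one_right hqs
  have h := Real.log_le_log (hs_inv ▸ inv_pos.2 (pow_pos hq d)) hs
  rw [hs_inv, one_div, Real.log_inv, Real.log_inv, Real.log_pow] at h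
  linarith [Real.log_two_gt_d9]

lemma div_le_sub_one_of_pow_mul_eq_one {d : ℕ} (hd : d ≠ 0) {q s : ℝ} (hq : 0 < q)
    (hqs : q ^ d * s = 1) (hs : s ≤ 1 / 2) (hds : (6 / 5) ^ d * s ≤ 4 * d ^ 2) :
    q / 385 ≤ q - 1 := by
  have hd_pos : (0 : ℝ) < d := Nat.cast_pos.2 (Nat.pos_of_ne_zero hd)
  have hs_inv : s = (q ^ d)⁻¹ := eq_inv_of_mul_eq_one_right hqs
  have hs_pos : 0 < s := hs_inv ▸ inv_pos.2 (pow_pos hq d)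
  have hlog_s : Real.log s = -(d * Real.log q) := by rw [hs_inv, Real.log_inv, Real.log_pow]
  have hsmall := half_le_mul_log_of_pow_mul_eq_one hq hqs hs
  have hlarge : (d : ℝ) / 12 - 8 ≤ d * Real.log q := by
    have h := Real.log_le_log (by positivity) hds
    rw [Real.log_mul (by positivity) hs_pos.ne', Real.log_pow] at h
    have hlog := Real.one_sub_inv_le_log_of_pos (show (0 : ℝ) < 6 / 5 by norm_num)
    norm_num1 at hlog
    nlinarith [log_four_mul_sq_le hd_pos]
  have hlog_q : 1 / 384 ≤ Real.log q := by
    refine le_of_mul_le_mul_left ?_ hd_pos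
    rcases le_total (d : ℝ) 192 with h | h
    · linarith only [h, hsmall]
    · linarith only [h, hlarge]
  linarith [Real.log_le_sub_one_of_pos hq]

lemma half_le_of_pow_mul_eq_one {d : ℕ} {q s x : ℝ} (hq : 0 < q) (hqs : q ^ d * s = 1)
    (hs : s ≤ 1 / 2) (hx : d * s * (q - 1) ≤ x) : s / 2 ≤ x := by
  have hs_pos : 0 < s := pos_of_mul_pos_right (hqs ▸ one_pos) (pow_pos hq _).le
  calc s / 2 = s * (1 / 2) := div_eq_mul_one_div s 2
    _ ≤ s * (d * Real.log q) := by gcongr; exact half_le_mul_log_of_pow_mul_eq_one hq hqs hs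
    _ ≤ s * (d * (q - 1)) := by gcongr; exact Real.log_le_sub_one_of_pos hq
    _ = d * s * (q - 1) := by ring
    _ ≤ x := hx

lemma mul_div_le_of_pow_mul_eq_one {d : ℕ} (hd : d ≠ 0) {q s x M : ℝ} (hq : 0 < q)
    (hqs : q ^ d * s = 1) (hs : s ≤ 1 / 2) (hM : (6 / 5) ^ d ≤ 2 * M)
    (hx : d * s * (q - 1) ≤ x) (hxM : x * M ≤ d ^ 2) : d * s * q / 385 ≤ x := by
  have hs_pos : 0 < s := pos_of_mul_pos_right (hqs ▸ one_pos) (pow_pos hq _).le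
  have h2M : 0 ≤ 2 * M := le_trans (by positivity) hM
  have hds : (6 / 5) ^ d * s ≤ 4 * d ^ 2 :=
    calc (6 / 5) ^ d * s ≤ 2 * M * (2 * x) := by
          gcongr
          linarith [half_le_of_pow_mul_eq_one hq hqs hs hx]
      _ = 4 * (x * M) := by ring
      _ ≤ 4 * d ^ 2 := by gcongr
  calc d * s * q / 385 = d * s * (q / 385) := mul_div_assoc _ _ _
    _ ≤ d * s * (q - 1) := by
        gcongr
        exact div_le_sub_one_of_pow_mul_eq_one hd hq hqs hs hds
    _ ≤ x := hx

lemma mul_le_of_pow_mul_eq_one {d : ℕ} (hd : 2 ≤ d) {q s x M r : ℝ} (hq : 0 < q)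
    (hqs : q ^ d * s = 1) (hs : s ≤ 1 / 2) (hM₁ : 1 ≤ M) (hM : (6 / 5) ^ d ≤ 2 * M) (hr : 1 ≤ r)
    (hx : d * s * (q - 1) ≤ x) (hxM : x * M * r ^ (d - 1) ≤ d ^ 2) :
    d * s * r ≤ 2 * 385 ^ 2 * x := by
  obtain ⟨e, rfl⟩ : ∃ e, d = e + 1 := ⟨d - 1, by omega⟩
  have he : e ≠ 0 := by omega
  set D : ℝ := ((e + 1 : ℕ) : ℝ) with hD
  have hD_pos : 0 < D := by positivity
  have hs_pos : 0 < s := pos_of_mul_pos_right (hqs ▸ one_pos) (pow_pos hq _).le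
  have hx_pos : 0 < x := (half_pos hs_pos).trans_le (half_le_of_pow_mul_eq_one hq hqs hs hx)
  have hxM₁ : x * M ≤ D ^ 2 :=
    (le_mul_of_one_le_right (by positivity) (one_le_pow₀ hr)).trans hxM
  have hqx : D * s * q / 385 ≤ x :=
    mul_div_le_of_pow_mul_eq_one e.succ_ne_zero hq hqs hs hM hx hxM₁
  have hD_le : D ≤ 2 ^ e := by
    rw [hD]
    exact_mod_cast Nat.lt_two_pow_self (n := e)
  refine le_of_pow_le_pow_left₀ he (by positivity) ?_
  refine le_of_mul_le_mul_right (a := D) ?_ hD_pos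
  calc (D * s * r) ^ e * D = 385 ^ (e + 1) * (D * s * q / 385) ^ (e + 1) * r ^ e := by
        rw [div_pow, mul_div_cancel₀ _ (by positivity)]
        linear_combination -(D ^ (e + 1) * s ^ e * r ^ e) * hqs
    _ ≤ 385 ^ (e + 1) * x ^ (e + 1) * r ^ e := by gcongr
    _ ≤ 385 ^ (e + 1) * x ^ e * (x * M * r ^ e) := by
        rw [pow_succ x, ← mul_assoc, mul_assoc _ x, mul_assoc x M]
        gcongr
        exact le_mul_of_one_le_left (by positivity) hM₁
    _ ≤ 385 ^ (e + 1) * x ^ e * D ^ 2 := by gcongr; exact hxM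
    _ = 385 * (385 ^ e * D * x ^ e) * D := by ring
    _ ≤ 385 ^ e * (385 ^ e * 2 ^ e * x ^ e) * D := by
        gcongr
        exact le_self_pow₀ (by norm_num) he
    _ = (2 * 385 ^ 2 * x) ^ e * D := by
        rw [mul_pow, mul_pow, sq, mul_pow]
        ring

/-- At the fine scales the first bound is at most of order `x / d`, at the coarse scales the second
one is, and both decay geometrically away from the scale where they cross. -/
lemma sum_min_le {d : ℕ} (hd : 2 ≤ d) {q s x M : ℝ} (hq : 0 < q) (hqs : q ^ d * s = 1)
    (hs : s ≤ 1 / 2) (hM₁ : 1 ≤ M) (hM : (6 / 5) ^ d ≤ 2 * M) (hx₀ : 0 ≤ x)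
    (hx : d * s * (q - 1) ≤ x) (t : Finset ℕ) :
    ∑ j ∈ t, min (2 * s * 2 ^ j) √(x / M / (2 ^ j) ^ (d - 1)) ≤
      (8 * 385 ^ 2 + 4) * x / d := by
  classical
  let good (j : ℕ) : Prop := (d : ℝ) ^ 2 ≤ x * M * (2 ^ j) ^ (d - 1)
  have hd_pos : (0 : ℝ) < d := by positivity
  have hs_pos : 0 < s := pos_of_mul_pos_right (hqs ▸ one_pos) (pow_pos hq _).le
  have hgood : ∑ j ∈ t with good j, √(x / M / (2 ^ j) ^ (d - 1)) ≤ 4 * (x / d) := by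
    refine sum_sqrt_div_two_pow_le (by omega) (by positivity) (by positivity) fun j hj => ?_
    rw [div_div, Real.sqrt_le_left (by positivity), div_pow,
      div_le_div_iff₀ (by positivity) (by positivity)]
    calc x * d ^ 2 ≤ x * (x * M * (2 ^ j) ^ (d - 1)) := by
          gcongr
          exact (mem_filter.1 hj).2
      _ = x ^ 2 * (M * (2 ^ j) ^ (d - 1)) := by ring
  have hbad : ∑ j ∈ t with ¬good j, 2 * s * 2 ^ j ≤ 2 * (4 * 385 ^ 2 * x / d) := by
    refine sum_mul_two_pow_le (by positivity) (by positivity) fun j hj => ?_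
    rw [le_div_iff₀ hd_pos]
    linarith [mul_le_of_pow_mul_eq_one hd hq hqs hs hM₁ hM (one_le_pow₀ one_le_two) hx
      (not_le.1 (mem_filter.1 hj).2).le]
  calc ∑ j ∈ t, min (2 * s * 2 ^ j) √(x / M / (2 ^ j) ^ (d - 1))
      ≤ ∑ j ∈ t with good j, √(x / M / (2 ^ j) ^ (d - 1)) +
          ∑ j ∈ t with ¬good j, 2 * s * 2 ^ j := by
        rw [← sum_filter_add_sum_filter_not t good]
        gcongr
        · exact min_le_right _ _
        · exact min_le_left _ _
    _ ≤ 4 * (x / d) + 2 * (4 * 385 ^ 2 * x / d) := add_le_add hgood hbad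
    _ = (8 * 385 ^ 2 + 4) * x / d := by ring

end Scales

section Sobolev

open scoped BigOperators

variable {κ d M : ℕ}

/-- Families of `M * 2 ^ (j * d)` samples at scale `j`: a point of the grid of side `2 ^ κ` together
with new offsets within its dyadic block of side `2 ^ (κ - j)`. On average each of the
`2 ^ (j * d)` blocks receives `M` of the samples. -/
abbrev ScaleSample (κ d M j : ℕ) : Type :=
  Fin (M * (2 ^ j) ^ d) → GPt (2 ^ κ) d × GPt (2 ^ (κ - j)) d

/-- The signed measure that resamples the points of `ω` within their blocks. -/
def scaleDipole {j : ℕ} (ω : ScaleSample κ d M j) : zeroSum (GPt (2 ^ κ) d) :=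
  resampleDipole (pow_dvd_pow 2 (Nat.sub_le κ j)) ω

lemma inv_mul_expect_abs_pairing_indicator_le [NeZero M] [NeZero d] {j : ℕ} (hj : j ≤ κ)
    (S : Set (GPt (2 ^ κ) d)) :
    ((2 : ℝ) ^ (κ - j))⁻¹ *
        𝔼 ω : ScaleSample κ d M j, |pairing (S.indicator 1) (scaleDipole ω)| ≤
      (2 ^ κ)⁻¹ * min (2 * (𝔼 x, S.indicator (1 : GPt (2 ^ κ) d → ℝ) x) * 2 ^ j)
        √(2 ^ κ * (∑ i, 𝔼 x, |S.indicator (1 : GPt (2 ^ κ) d → ℝ) (gridNext i x) -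
          S.indicator 1 x|) / M / (2 ^ j) ^ (d - 1)) := by
  set E := ∑ i, 𝔼 x, |S.indicator (1 : GPt (2 ^ κ) d → ℝ) (gridNext i x) - S.indicator 1 x|
  set P := 𝔼 ω : ScaleSample κ d M j, |pairing (S.indicator 1) (scaleDipole ω)|
  have _hP : 0 ≤ P := expect_nonneg fun _ _ => abs_nonneg _
  have hM : (M : ℝ) ≠ 0 := NeZero.ne _
  have hsplit : (2 : ℝ) ^ κ = 2 ^ j * 2 ^ (κ - j) := by rw [← pow_add, Nat.add_sub_cancel' hj]
  have hinv : ((2 : ℝ) ^ (κ - j))⁻¹ = (2 ^ κ)⁻¹ * 2 ^ j := by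
    rw [hsplit]
    field_simp
  have hdvd : 2 ^ (κ - j) ∣ 2 ^ κ := pow_dvd_pow 2 (Nat.sub_le κ j)
  rw [hinv, mul_assoc]
  gcongr
  refine le_min ?_ (Real.le_sqrt_of_sq_le ?_)
  · rw [mul_comm]
    gcongr
    exact expect_abs_pairing_resampleDipole_indicator_le hdvd S
  · calc (2 ^ j * P) ^ 2 = (2 ^ j) ^ 2 * P ^ 2 := mul_pow _ _ _
      _ ≤ (2 ^ j) ^ 2 * ((2 ^ (κ - j) : ℕ) * E / Fintype.card (Fin (M * (2 ^ j) ^ d))) := by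
          gcongr
          exact sq_expect_abs_pairing_resampleDipole_indicator_le hdvd S
      _ = 2 ^ κ * E / M / (2 ^ j) ^ (d - 1) := by
          rw [Fintype.card_fin, hsplit, ← pow_sub_one_mul (NeZero.ne d)]
          push_cast
          field_simp

lemma sum_min_le_of_expect_le {M : ℝ} (hd : 2 ≤ d) (hM₁ : 1 ≤ M)
    (hM : (6 / 5 : ℝ) ^ d ≤ 2 * M) {m : ℕ} {S : Set (GPt m d)}
    (hs : 𝔼 x, S.indicator (1 : GPt m d → ℝ) x ≤ 1 / 2) (t : Finset ℕ) :
    ∑ j ∈ t, min (2 * (𝔼 x, S.indicator (1 : GPt m d → ℝ) x) * 2 ^ j)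
        √(m * (∑ i, 𝔼 x, |S.indicator (1 : GPt m d → ℝ) (gridNext i x) - S.indicator 1 x|) / M /
          (2 ^ j) ^ (d - 1)) ≤
      (8 * 385 ^ 2 + 4) *
        (m * ∑ i, 𝔼 x, |S.indicator (1 : GPt m d → ℝ) (gridNext i x) - S.indicator 1 x|) / d := by
  set s := 𝔼 x, S.indicator (1 : GPt m d → ℝ) x
  set E := ∑ i, 𝔼 x, |S.indicator (1 : GPt m d → ℝ) (gridNext i x) - S.indicator 1 x|
  have _hE : 0 ≤ E := sum_nonneg fun i _ => expect_nonneg fun x _ => abs_nonneg _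
  have hs₀ : 0 ≤ s := expect_nonneg fun x _ => Set.indicator_nonneg (fun _ _ => zero_le_one) x
  rcases hs₀.eq_or_lt with h | hs_pos
  · calc ∑ j ∈ t, min (2 * s * 2 ^ j) √(m * E / M / (2 ^ j) ^ (d - 1))
        ≤ ∑ j ∈ t, 2 * s * 2 ^ j := sum_le_sum fun j _ => min_le_left _ _
      _ = 0 := by simp only [← h, mul_zero, zero_mul, sum_const_zero]
      _ ≤ _ := by positivity
  · have hqs : (s⁻¹ ^ (d⁻¹ : ℝ)) ^ d * s = 1 := by
      rw [Real.rpow_inv_natCast_pow (inv_nonneg.2 hs₀) (by omega), inv_mul_cancel₀ hs_pos.ne']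
    have hq : 0 < s⁻¹ ^ (d⁻¹ : ℝ) := Real.rpow_pos_of_pos (inv_pos.2 hs_pos) _
    exact sum_min_le hd hq hqs hs hM₁ hM (by positivity)
      (mul_expect_indicator_mul_sub_one_le S hq hqs) t

lemma sum_inv_mul_expect_abs_pairing_indicator_le_of_expect_le [NeZero M] (hd : 2 ≤ d)
    (hM : (6 / 5 : ℝ) ^ d ≤ 2 * M) {S : Set (GPt (2 ^ κ) d)}
    (hs : 𝔼 x, S.indicator (1 : GPt (2 ^ κ) d → ℝ) x ≤ 1 / 2) :
    ∑ j : Fin κ, ((2 : ℝ) ^ (κ - j : ℕ))⁻¹ *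
        𝔼 ω : ScaleSample κ d M j, |pairing (S.indicator 1) (scaleDipole ω)| ≤
      (8 * 385 ^ 2 + 4) / d * ∑ i, 𝔼 x,
        |S.indicator (1 : GPt (2 ^ κ) d → ℝ) (gridNext i x) - S.indicator 1 x| := by
  have : NeZero d := ⟨by omega⟩
  set s := 𝔼 x, S.indicator (1 : GPt (2 ^ κ) d → ℝ) x
  set E := ∑ i, 𝔼 x, |S.indicator (1 : GPt (2 ^ κ) d → ℝ) (gridNext i x) - S.indicator 1 x|
  have hM₁ : (1 : ℝ) ≤ M := Nat.one_le_cast.2 NeZero.one_le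
  have hsum := sum_min_le_of_expect_le hd hM₁ hM hs (range κ)
  rw [Nat.cast_pow, Nat.cast_ofNat] at hsum
  calc ∑ j : Fin κ, ((2 : ℝ) ^ (κ - j : ℕ))⁻¹ *
        𝔼 ω : ScaleSample κ d M j, |pairing (S.indicator 1) (scaleDipole ω)|
      ≤ ∑ j : Fin κ, (2 ^ κ)⁻¹ *
          min (2 * s * 2 ^ (j : ℕ)) √(2 ^ κ * E / M / (2 ^ (j : ℕ)) ^ (d - 1)) :=
        sum_le_sum fun j _ => inv_mul_expect_abs_pairing_indicator_le j.2.le S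
    _ = (2 ^ κ)⁻¹ * ∑ j ∈ range κ,
          min (2 * s * 2 ^ j) √(2 ^ κ * E / M / (2 ^ j) ^ (d - 1)) := by
        rw [← mul_sum, ← Fin.sum_univ_eq_sum_range fun j =>
          min (2 * s * 2 ^ j) √(2 ^ κ * E / M / (2 ^ j) ^ (d - 1))]
    _ ≤ (2 ^ κ)⁻¹ * ((8 * 385 ^ 2 + 4) * (2 ^ κ * E) / d) := by gcongr
    _ = (8 * 385 ^ 2 + 4) / d * E := by field_simp

theorem sum_inv_mul_expect_abs_pairing_indicator_le [NeZero M] (hd : 2 ≤ d)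
    (hM : (6 / 5 : ℝ) ^ d ≤ 2 * M) (S : Set (GPt (2 ^ κ) d)) :
    ∑ j : Fin κ, ((2 : ℝ) ^ (κ - j : ℕ))⁻¹ *
        𝔼 ω : ScaleSample κ d M j, |pairing (S.indicator 1) (scaleDipole ω)| ≤
      (8 * 385 ^ 2 + 4) / d * ∑ i, 𝔼 x,
        |S.indicator (1 : GPt (2 ^ κ) d → ℝ) (gridNext i x) - S.indicator 1 x| := by
  rcases le_or_gt (𝔼 x, S.indicator (1 : GPt (2 ^ κ) d → ℝ) x) (1 / 2) with hs | hs
  · exact sum_inv_mul_expect_abs_pairing_indicator_le_of_expect_le hd hM hs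
  · have hcompl : 𝔼 x, Sᶜ.indicator (1 : GPt (2 ^ κ) d → ℝ) x ≤ 1 / 2 := by
      simp only [Set.indicator_compl, Pi.sub_apply, Pi.one_apply, expect_sub_distrib,
        Fintype.expect_const]
      linarith
    have h := sum_inv_mul_expect_abs_pairing_indicator_le_of_expect_le (κ := κ) hd hM hcompl
    simp only [pairing_indicator_compl, abs_neg] at h
    simpa only [Set.indicator_compl, Pi.sub_apply, Pi.one_apply, sub_sub_sub_cancel_left,
      abs_sub_comm] using h

lemma sum_sigma_div_card_mul {ι : Type*} {Ω : ι → Type*} [Fintype ι] [∀ k, Fintype (Ω k)]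
    (α : ι → ℝ) (g : (Σ k, Ω k) → ℝ) :
    ∑ a : Σ k, Ω k, α a.1 / Fintype.card (Ω a.1) * g a = ∑ k, α k * 𝔼 ω, g ⟨k, ω⟩ := by
  rw [Fintype.sum_sigma]
  simp only [Fintype.expect_eq_sum_div_card, mul_div_assoc', mul_sum, sum_div, div_mul_eq_mul_div]

end Sobolev

section EmbeddingUpperBound

open scoped BigOperators

variable {κ d M : ℕ}

lemma sum_div_card_mul_abs_pairing_le [NeZero M] (hd : 2 ≤ d) (hM : (6 / 5 : ℝ) ^ d ≤ 2 * M)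
    (f : GPt (2 ^ κ) d → ℝ) :
    ∑ a : Σ j : Fin κ, ScaleSample κ d M j,
        ((2 : ℝ) ^ (κ - a.1 : ℕ))⁻¹ / Fintype.card (ScaleSample κ d M a.1) *
          |pairing f (scaleDipole a.2)| ≤
      ∑ e : Σ _ : Fin d, GPt (2 ^ κ) d,
        (8 * 385 ^ 2 + 4) / d / Fintype.card (GPt (2 ^ κ) d) *
          |f (gridNext e.1 e.2) - f e.2| := by
  refine sum_mul_abs_pairing_le_of_indicator (fun a => by positivity) (fun S => ?_) f
  rw [sum_sigma_div_card_mul fun j : Fin κ => ((2 : ℝ) ^ (κ - j : ℕ))⁻¹,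
    sum_sigma_div_card_mul fun _ : Fin d => ((8 * 385 ^ 2 + 4) / d : ℝ), ← mul_sum]
  exact sum_inv_mul_expect_abs_pairing_indicator_le hd hM S

variable {Y : Type*} [Fintype Y]

/-- The image of `scaleDipole ω` under a map `ι` of the grid. -/
def scaleDipoleMap (ι : GPt (2 ^ κ) d → Y) {j : ℕ} (ω : ScaleSample κ d M j) : zeroSum Y :=
  dipoleMean (fun i => ι (ω i).1)
    fun i => ι (swapOffsets (pow_dvd_pow 2 (Nat.sub_le κ j)) univ (ω i)).1

lemma pairing_scaleDipoleMap (ι : GPt (2 ^ κ) d → Y) {j : ℕ} (ω : ScaleSample κ d M j)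
    (f : Y → ℝ) : pairing f (scaleDipoleMap ι ω) = pairing (f ∘ ι) (scaleDipole ω) := by
  simp only [scaleDipoleMap, scaleDipole, resampleDipole, pairing_dipoleMean, Function.comp_apply]

variable {Ω : Type*} [MeasurableSpace Ω] {ρ : Measure Ω} [PseudoMetricSpace Y] [Nonempty Y]
  {C : NNReal}

theorem sum_inv_mul_expect_tcSeminorm_le_of_emd_embedding [NeZero M] (hd : 2 ≤ d)
    (hM : (6 / 5 : ℝ) ^ d ≤ 2 * M) {F : stdSimplex ℝ Y → Lp ℝ 1 ρ}
    (hF_ge : ∀ μ ν, tcSeminorm Y (stdSimplexSub μ ν) ≤ ‖F μ - F ν‖)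
    (hF_le : ∀ μ ν, ‖F μ - F ν‖ ≤ C * tcSeminorm Y (stdSimplexSub μ ν))
    {ι : GPt (2 ^ κ) d → Y} (hι : ∀ i x, dist (ι (gridNext i x)) (ι x) ≤ 1) :
    ∑ j : Fin κ, ((2 : ℝ) ^ (κ - j : ℕ))⁻¹ *
        𝔼 ω : ScaleSample κ d M j, tcSeminorm Y (scaleDipoleMap ι ω) ≤
      C * (8 * 385 ^ 2 + 4) := by
  let α (a : Σ j : Fin κ, ScaleSample κ d M j) : ℝ :=
    ((2 : ℝ) ^ (κ - a.1 : ℕ))⁻¹ / Fintype.card (ScaleSample κ d M a.1)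
  let β (_ : Σ _ : Fin d, GPt (2 ^ κ) d) : ℝ :=
    (8 * 385 ^ 2 + 4) / d / Fintype.card (GPt (2 ^ κ) d)
  have hα (a : Σ j : Fin κ, ScaleSample κ d M j) : 0 ≤ α a := by positivity
  have hβ (e : Σ _ : Fin d, GPt (2 ^ κ) d) : 0 ≤ β e := by positivity
  have hmain : ∑ a, α a * tcSeminorm Y (scaleDipoleMap ι a.2) ≤
      C * ∑ e, β e * dist (ι (gridNext e.1 e.2)) (ι e.2) := by
    refine sum_mul_tcSeminorm_le_of_emd_embedding hF_ge hF_le hα hβ fun f => ?_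
    simp only [pairing_scaleDipoleMap]
    exact sum_div_card_mul_abs_pairing_le hd hM (f ∘ ι)
  calc ∑ j : Fin κ, ((2 : ℝ) ^ (κ - j : ℕ))⁻¹ *
        𝔼 ω : ScaleSample κ d M j, tcSeminorm Y (scaleDipoleMap ι ω)
      = ∑ a, α a * tcSeminorm Y (scaleDipoleMap ι a.2) := by
        simp only [α]
        rw [sum_sigma_div_card_mul fun j : Fin κ => ((2 : ℝ) ^ (κ - j : ℕ))⁻¹]
    _ ≤ C * ∑ e, β e * dist (ι (gridNext e.1 e.2)) (ι e.2) := hmain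
    _ ≤ C * ∑ e, β e * 1 := by
        gcongr with e
        exact hι e.1 e.2
    _ = C * (8 * 385 ^ 2 + 4) := by
        rw [sum_sigma_div_card_mul (fun _ : Fin d => ((8 * 385 ^ 2 + 4) / d : ℝ)) fun _ => 1]
        simp only [Fintype.expect_const, mul_one, sum_const, card_univ, Fintype.card_fin,
          nsmul_eq_mul]
        field_simp

end EmbeddingUpperBound

section ExponentialSums

variable {l : ℝ}

lemma sum_exp_neg_mul_le {α : Type*} [LinearOrder α] (hl : 0 < l) {v : α → ℝ}
    (hv : ∀ a b, a < b → v a + 1 ≤ v b) {s : Finset α} (hs : ∀ a ∈ s, 1 ≤ v a) :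
    ∑ a ∈ s, Real.exp (-(l * v a)) ≤ 1 / l := by
  have hstep (a b : α) (hab : a < b) :
      Real.exp (-(l * v b)) ≤ Real.exp (-l) * Real.exp (-(l * v a)) := by
    rw [← Real.exp_add, Real.exp_le_exp]
    linarith [mul_le_mul_of_nonneg_left (hv a b hab) hl.le]
  have hbound (a : α) (ha : a ∈ s) : Real.exp (-(l * v a)) ≤ Real.exp (-l) :=
    Real.exp_le_exp.2 (neg_le_neg (le_mul_of_one_le_right hl.le (hs a ha)))
  calc ∑ a ∈ s, Real.exp (-(l * v a)) ≤ Real.exp (-l) / (1 - Real.exp (-l)) :=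
        sum_le_div_one_sub (Real.exp_nonneg _) (Real.exp_lt_one_iff.2 (neg_neg_of_pos hl)) hstep s
          (Real.exp_nonneg _) hbound
    _ = 1 / (Real.exp l - 1) := by
        rw [Real.exp_neg]
        field_simp
    _ ≤ 1 / l := one_div_le_one_div_of_le hl (by linarith [Real.add_one_le_exp l])

lemma sum_exp_neg_mul_abs_sub_le {m : ℕ} (hl : 0 < l) (a : Fin m) :
    ∑ b : Fin m, Real.exp (-(l * |((a : ℕ) : ℝ) - (b : ℕ)|)) ≤ 1 + 2 / l := by
  have hgap {b c : Fin m} (h : b < c) : ((b : ℕ) : ℝ) + 1 ≤ (c : ℕ) := mod_cast h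
  have habove : ∑ b ∈ Ioi a, Real.exp (-(l * |((a : ℕ) : ℝ) - (b : ℕ)|)) ≤ 1 / l :=
    calc ∑ b ∈ Ioi a, Real.exp (-(l * |((a : ℕ) : ℝ) - (b : ℕ)|))
        = ∑ b ∈ Ioi a, Real.exp (-(l * ((b : ℕ) - (a : ℕ)))) :=
          sum_congr rfl fun b hb => by
            rw [abs_sub_comm, abs_of_nonneg (by linarith [hgap (mem_Ioi.1 hb)])]
      _ ≤ 1 / l :=
          sum_exp_neg_mul_le hl (fun b c h => by linarith [hgap h]) fun b hb => by
            linarith [hgap (mem_Ioi.1 hb)]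
  have hbelow : ∑ b ∈ Iio a, Real.exp (-(l * |((a : ℕ) : ℝ) - (b : ℕ)|)) ≤ 1 / l :=
    calc ∑ b ∈ Iio a, Real.exp (-(l * |((a : ℕ) : ℝ) - (b : ℕ)|))
        = ∑ b ∈ Iio a, Real.exp (-(l * ((a : ℕ) - (b : ℕ)))) :=
          sum_congr rfl fun b hb => by
            rw [abs_of_nonneg (by linarith [hgap (mem_Iio.1 hb)])]
      _ ≤ 1 / l :=
          sum_exp_neg_mul_le (α := (Fin m)ᵒᵈ) (v := fun b : Fin m => ((a : ℕ) : ℝ) - (b : ℕ)) hl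
            (fun b c h => by linarith [hgap (b := c) (c := b) h]) fun b hb => by
            linarith [hgap (mem_Iio.1 hb)]
  rw [Fintype.sum_eq_add_sum_compl a, ← Ioi_disjUnion_Iio a, sum_disjUnion, sub_self, abs_zero,
    mul_zero, neg_zero, Real.exp_zero]
  calc 1 + (_ + _) ≤ 1 + (1 / l + 1 / l) := by gcongr
    _ = 1 + 2 / l := by ring

variable {m K d : ℕ}

lemma sum_exp_neg_mul_gdistM_le (hl : 0 < l) (x : GPt m d) {φ : Fin d → Fin K → Fin m}
    (hφ : ∀ i, Function.Injective (φ i)) :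
    ∑ o : GPt K d, Real.exp (-(l * gdistM x fun i => φ i (o i))) ≤ (1 + 2 / l) ^ d :=
  calc ∑ o : GPt K d, Real.exp (-(l * gdistM x fun i => φ i (o i)))
      = ∏ i, ∑ o, Real.exp (-(l * |((x i : ℕ) : ℝ) - (φ i o : ℕ)|)) := by
        rw [Fintype.prod_sum]
        simp only [gdistM, mul_sum, ← sum_neg_distrib, Real.exp_sum]
    _ ≤ ∏ i, ∑ b : Fin m, Real.exp (-(l * |((x i : ℕ) : ℝ) - (b : ℕ)|)) := by
        gcongr with i
        rw [← sum_image (f := fun b : Fin m => Real.exp (-(l * |((x i : ℕ) : ℝ) - (b : ℕ)|)))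
          (hφ i).injOn]
        exact sum_le_univ_sum_of_nonneg fun _ => Real.exp_nonneg _
    _ ≤ ∏ _i : Fin d, (1 + 2 / l) := by
        gcongr with i
        exact sum_exp_neg_mul_abs_sub_le hl (x i)
    _ = (1 + 2 / l) ^ d := by rw [prod_const, card_univ, Fintype.card_fin]

end ExponentialSums

section GridMetric

variable {m d : ℕ}

/-- The ℓ1 metric of the grid, activated locally in place of the sup metric of the function type. -/
abbrev gridPseudoMetricSpace (m d : ℕ) : PseudoMetricSpace (GPt m d) where
  dist := gdistM
  dist_self u := by simp only [gdistM, sub_self, abs_zero, sum_const_zero]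
  dist_comm u v := by simp only [gdistM, abs_sub_comm]
  dist_triangle u v w := by
    simp only [gdistM, ← sum_add_distrib]
    exact sum_le_sum fun i _ => abs_sub_le _ _ _

attribute [local instance] gridPseudoMetricSpace

lemma dist_gridNext_le (i : Fin d) (x : GPt m d) : dist (gridNext i x) x ≤ 1 := by
  have hsucc : |(((Order.succ (x i) : Fin m) : ℕ) : ℝ) - (x i : ℕ)| ≤ 1 := by
    have h₁ : (x i : ℕ) ≤ (Order.succ (x i) : Fin m) := Order.le_succ (x i)
    have h₂ : ((Order.succ (x i) : Fin m) : ℕ) ≤ x i + 1 :=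
      (val_orderSucc (x i)).trans_le (min_le_left _ _)
    rw [abs_of_nonneg (sub_nonneg.2 (Nat.cast_le.2 h₁)), sub_le_iff_le_add']
    exact_mod_cast h₂
  change gdistM (gridNext i x) x ≤ 1
  rw [gdistM, sum_eq_single i (fun j _ hj => ?_) fun h => absurd (mem_univ i) h]
  · rwa [gridNext, Function.update_self]
  · rw [gridNext, Function.update_of_ne hj, sub_self, abs_zero]

lemma isometry_castLE_comp {k : ℕ} (h : k ≤ m) :
    Isometry fun x : GPt k d => (Fin.castLE h ∘ x : GPt m d) :=
  Isometry.of_dist_eq fun _ _ => rfl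

lemma tcNormG_sub_eq_tcSeminorm (μ ν : stdSimplex ℝ (GPt m d)) :
    tcNormG m d (μ.1 - ν.1) = tcSeminorm (GPt m d) (stdSimplexSub μ ν) := by
  rw [tcSeminorm_apply, tcNormG, iSup]
  congr 1
  ext r
  simp only [Set.mem_ofPred_eq, Set.mem_range, Subtype.exists, exists_prop, pairing_apply,
    eq_comm (a := r)]
  refine exists_congr fun f => and_congr_left fun _ => ?_
  rw [lipschitzWith_iff_dist_le_mul]
  simp only [NNReal.coe_one, one_mul]
  rfl

end GridMetric

section TransportationLowerBound

open scoped BigOperators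

variable {l : ℝ}

/-- Tested against the distance to `y`: the sum on the right is at least `exp (-l * f (x j))` for
that distance `f`, and `1 + (t - l * f) ≤ exp (t - l * f)`. -/
lemma le_tcSeminorm_dipoleMean {X J : Type*} [Fintype X] [PseudoMetricSpace X] [Fintype J]
    [Nonempty J] (hl : 0 < l) (t : ℝ) (x y : J → X) :
    (t + 1 - Real.exp t * ((∑ i, ∑ j, Real.exp (-(l * dist (x i) (y j)))) / Fintype.card J)) / l ≤
      tcSeminorm X (dipoleMean x y) := by
  let f (z : X) : ℝ := Metric.infDist z (Set.range y)
  have hf_y (j : J) : f (y j) = 0 := Metric.infDist_zero_of_mem ⟨j, rfl⟩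
  have hf_x (i : J) : t + 1 - Real.exp t * ∑ j, Real.exp (-(l * dist (x i) (y j))) ≤
      l * f (x i) := by
    obtain ⟨_, ⟨j₀, rfl⟩, hj₀⟩ :=
      (Set.finite_range y).isCompact.exists_infDist_eq_dist (Set.range_nonempty y) (x i)
    have hexp : Real.exp (-(l * f (x i))) ≤ ∑ j, Real.exp (-(l * dist (x i) (y j))) := by
      simp only [f, hj₀]
      exact single_le_sum (f := fun j => Real.exp (-(l * dist (x i) (y j))))
        (fun _ _ => Real.exp_nonneg _) (mem_univ j₀)
    have htangent := Real.add_one_le_exp (t + -(l * f (x i)))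
    rw [Real.exp_add] at htangent
    linarith [mul_le_mul_of_nonneg_left hexp (Real.exp_nonneg t)]
  have _hcard : (0 : ℝ) < Fintype.card J := Nat.cast_pos.2 Fintype.card_pos
  calc (t + 1 - Real.exp t * ((∑ i, ∑ j, Real.exp (-(l * dist (x i) (y j)))) / Fintype.card J)) / l
      = (∑ i, (t + 1 - Real.exp t * ∑ j, Real.exp (-(l * dist (x i) (y j)))))
          / Fintype.card J / l := by
        rw [sum_sub_distrib, ← mul_sum, sum_const, card_univ, nsmul_eq_mul]
        field_simp
    _ ≤ (∑ i, l * f (x i)) / Fintype.card J / l := by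
        gcongr with i
        exact hf_x i
    _ = pairing f (dipoleMean x y) := by
        simp only [pairing_dipoleMean, hf_y, sub_zero, ← mul_sum]
        field_simp
    _ ≤ tcSeminorm X (dipoleMean x y) :=
        (le_abs_self _).trans (abs_pairing_le_tcSeminorm (Metric.lipschitz_infDist_pt _) _)

variable {m L d : ℕ}

lemma expect_exp_neg_mul_gdistM_swapOffsets_le [NeZero m] (hl : 0 < l) (hL : L ∣ m) :
    𝔼 p : GPt m d × GPt L d, Real.exp (-(l * gdistM p.1 (swapOffsets hL univ p).1)) ≤
      (1 + 2 / l) ^ d / L ^ d := by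
  rw [expect_prod]
  refine expect_le univ_nonempty fun x _ => ?_
  rw [Fintype.expect_eq_sum_div_card, Fintype.card_pi_const, Fintype.card_fin, Nat.cast_pow]
  gcongr
  simp only [swapOffsets, piecewise_univ]
  exact sum_exp_neg_mul_gdistM_le hl x fun i =>
    (Function.LeftInverse.injective (blockOffset_reblock hL (x i)))

variable [NeZero m] [NeZero L]

lemma expect_expect_exp_neg_mul_gdistM_swapOffsets_le (hl : 0 < l) (hL : L ∣ m) :
    𝔼 p : GPt m d × GPt L d, 𝔼 q : GPt m d × GPt L d,
        Real.exp (-(l * gdistM p.1 (swapOffsets hL univ q).1)) ≤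
      (1 + 2 / l) ^ d / m ^ d := by
  refine expect_le univ_nonempty fun p _ => ?_
  rw [expect_swapOffsets hL univ fun q => Real.exp (-(l * gdistM p.1 q.1)),
    expect_fst fun y => Real.exp (-(l * gdistM p.1 y)), Fintype.expect_eq_sum_div_card,
    Fintype.card_pi_const, Fintype.card_fin, Nat.cast_pow]
  gcongr
  exact sum_exp_neg_mul_gdistM_le hl p.1 (φ := fun _ => id) fun _ => Function.injective_id

variable {J : Type*} [Fintype J] [DecidableEq J]

lemma expect_sum_sum_exp_neg_mul_gdistM_le (hl : 0 < l) (hL : L ∣ m) :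
    𝔼 ω : J → GPt m d × GPt L d,
        ∑ i, ∑ j, Real.exp (-(l * gdistM (ω i).1 (swapOffsets hL univ (ω j)).1)) ≤
      Fintype.card J * (1 / L ^ d + Fintype.card J / m ^ d) * (1 + 2 / l) ^ d := by
  rw [expect_pi_sum_sum fun p q : GPt m d × GPt L d =>
    Real.exp (-(l * gdistM p.1 (swapOffsets hL univ q).1))]
  calc _ ≤ Fintype.card J * ((1 + 2 / l) ^ d / L ^ d)
        + Fintype.card J * Fintype.card J * ((1 + 2 / l) ^ d / m ^ d) := by
        gcongr
        · exact expect_exp_neg_mul_gdistM_swapOffsets_le hl hL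
        · exact sub_le_self _ zero_le_one
        · exact expect_expect_exp_neg_mul_gdistM_swapOffsets_le hl hL
    _ = _ := by ring

lemma exp_div_mul_one_add_mul_pow_le_one (hd : 2 ≤ d) :
    Real.exp (d / 16) * ((1 + (6 / 5) ^ d) * (11 / 20) ^ d) ≤ 1 := by
  have hexp : Real.exp (1 / 16) ≤ 16 / 15 :=
    (Real.exp_bound_div_one_sub_of_interval (by norm_num) (by norm_num)).trans (by norm_num)
  have hone : (1 : ℝ) ≤ (6 / 5) ^ d := one_le_pow₀ (by norm_num)
  calc Real.exp (d / 16) * ((1 + (6 / 5) ^ d) * (11 / 20) ^ d)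
      = Real.exp (1 / 16) ^ d * ((1 + (6 / 5) ^ d) * (11 / 20) ^ d) := by
        rw [← Real.exp_nat_mul, mul_one_div]
    _ ≤ (16 / 15) ^ d * (((6 / 5) ^ d + (6 / 5) ^ d) * (11 / 20) ^ d) := by gcongr
    _ = 2 * (88 / 125) ^ d := by
        rw [← two_mul, mul_assoc, mul_left_comm, ← mul_pow, ← mul_pow]
        norm_num
    _ ≤ 2 * (88 / 125) ^ 2 := by
        gcongr ?_ * ?_
        exact pow_le_pow_of_le_one (by norm_num) (by norm_num) hd
    _ ≤ 1 := by norm_num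

variable [Nonempty J]

lemma expect_sum_sum_exp_div_card_le (hl : 0 < l) (hL : L ∣ m)
    (hJ : (Fintype.card J : ℝ) * L ^ d ≤ (6 / 5) ^ d * m ^ d) :
    (𝔼 ω : J → GPt m d × GPt L d,
        ∑ i, ∑ j, Real.exp (-(l * gdistM (ω i).1 (swapOffsets hL univ (ω j)).1))) /
          Fintype.card J ≤
      (1 + (6 / 5) ^ d) * ((1 + 2 / l) / L) ^ d := by
  have hm₀ : (0 : ℝ) < m := Nat.cast_pos.2 (NeZero.pos m)
  have hL₀ : (0 : ℝ) < L := Nat.cast_pos.2 (NeZero.pos L)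
  have hJ₀ : (0 : ℝ) < Fintype.card J := Nat.cast_pos.2 Fintype.card_pos
  rw [div_le_iff₀ hJ₀]
  calc _ ≤ Fintype.card J * (1 / L ^ d + Fintype.card J / m ^ d) * (1 + 2 / l) ^ d :=
        expect_sum_sum_exp_neg_mul_gdistM_le hl hL
    _ ≤ Fintype.card J * (1 / L ^ d + (6 / 5) ^ d / L ^ d) * (1 + 2 / l) ^ d := by
        gcongr Fintype.card J * (1 / L ^ d + ?_) * (1 + 2 / l) ^ d
        rwa [div_le_div_iff₀ (pow_pos hm₀ d) (pow_pos hL₀ d)]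
    _ = (1 + (6 / 5) ^ d) * ((1 + 2 / l) / L) ^ d * Fintype.card J := by
        rw [div_pow (1 + 2 / l)]
        ring

variable {Y : Type*} [Fintype Y] [PseudoMetricSpace Y]

attribute [local instance] gridPseudoMetricSpace

/-- The exponent `l = 40 / L` makes `(1 + 2 / l) / L ≤ 11 / 20` for `2 ≤ L`. -/
theorem mul_div_le_expect_tcSeminorm (hd : 2 ≤ d) (hL₂ : 2 ≤ L) (hL : L ∣ m)
    (hJ : (Fintype.card J : ℝ) * L ^ d ≤ (6 / 5) ^ d * m ^ d) {ι : GPt m d → Y} (hι : Isometry ι) :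
    d * L / 640 ≤ 𝔼 ω : J → GPt m d × GPt L d, tcSeminorm Y
      (dipoleMean (fun j => ι (ω j).1) fun j => ι (swapOffsets hL univ (ω j)).1) := by
  have hL₂' : (2 : ℝ) ≤ L := Nat.ofNat_le_cast.2 hL₂
  set l : ℝ := 40 / L with hl_def
  have hl : 0 < l := by positivity
  let W (ω : J → GPt m d × GPt L d) : ℝ :=
    ∑ i, ∑ j, Real.exp (-(l * gdistM (ω i).1 (swapOffsets hL univ (ω j)).1))
  have hbase : (1 + 2 / l) / L ≤ 11 / 20 := by
    rw [hl_def, div_div_eq_mul_div, div_le_iff₀ (by linarith)]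
    linarith
  have hW : (𝔼 ω, W ω) / Fintype.card J ≤ (1 + (6 / 5) ^ d) * (11 / 20) ^ d :=
    (expect_sum_sum_exp_div_card_le hl hL hJ).trans (by gcongr)
  calc (d : ℝ) * L / 640 = (d / 16 + 1 - 1) / l := by
        rw [hl_def]
        field_simp
        ring
    _ ≤ (d / 16 + 1 - Real.exp (d / 16) * ((𝔼 ω, W ω) / Fintype.card J)) / l := by
        gcongr
        exact (mul_le_mul_of_nonneg_left hW (Real.exp_nonneg _)).trans
          (exp_div_mul_one_add_mul_pow_le_one hd)
    _ = 𝔼 ω, (d / 16 + 1 - Real.exp (d / 16) * (W ω / Fintype.card J)) / l := by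
        rw [← expect_div, expect_sub_distrib, ← mul_expect, ← expect_div, Fintype.expect_const]
    _ ≤ _ := by
        refine expect_le_expect fun ω _ => ?_
        have h := le_tcSeminorm_dipoleMean hl (d / 16) (fun j => ι (ω j).1)
          fun j => ι (swapOffsets hL univ (ω j)).1
        simp only [hι.dist_eq] at h
        exact h

end TransportationLowerBound

section Distortion

open scoped BigOperators

attribute [local instance] gridPseudoMetricSpace

lemma mul_div_le_sum_inv_mul_expect_tcSeminorm {κ d M : ℕ} [NeZero M] (hd : 2 ≤ d)
    (hM : (M : ℝ) ≤ (6 / 5) ^ d) {Y : Type*} [Fintype Y] [PseudoMetricSpace Y]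
    {ι : GPt (2 ^ κ) d → Y} (hι : Isometry ι) :
    κ * d / 640 ≤ ∑ j : Fin κ, ((2 : ℝ) ^ (κ - j : ℕ))⁻¹ *
      𝔼 ω : ScaleSample κ d M j, tcSeminorm Y (scaleDipoleMap ι ω) := by
  have hscale (j : Fin κ) : (d : ℝ) / 640 ≤ ((2 : ℝ) ^ (κ - j : ℕ))⁻¹ *
      𝔼 ω : ScaleSample κ d M j, tcSeminorm Y (scaleDipoleMap ι ω) := by
    have hL₂ : 2 ≤ 2 ^ (κ - j : ℕ) := le_self_pow₀ one_le_two (Nat.sub_ne_zero_of_lt j.2)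
    have hcard : (Fintype.card (Fin (M * (2 ^ (j : ℕ)) ^ d)) : ℝ) * (2 ^ (κ - j : ℕ) : ℕ) ^ d ≤
        (6 / 5) ^ d * (2 ^ κ : ℕ) ^ d := by
      have hsplit : (2 : ℝ) ^ κ = 2 ^ (j : ℕ) * 2 ^ (κ - j : ℕ) := by
        rw [← pow_add, Nat.add_sub_cancel' j.2.le]
      rw [Fintype.card_fin]
      push_cast
      rw [hsplit, mul_pow, ← mul_assoc]
      gcongr
    have h := mul_div_le_expect_tcSeminorm hd hL₂ (pow_dvd_pow 2 (Nat.sub_le κ j)) hcard hι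
    rw [Nat.cast_pow, Nat.cast_ofNat] at h
    rw [← div_eq_inv_mul, le_div_iff₀ (by positivity), div_mul_eq_mul_div]
    exact h
  calc (κ : ℝ) * d / 640 = ∑ _j : Fin κ, (d : ℝ) / 640 := by
        rw [sum_const, card_univ, Fintype.card_fin, nsmul_eq_mul, mul_div_assoc]
    _ ≤ _ := sum_le_sum fun j _ => hscale j

lemma log_le_two_mul_natLog_two {m : ℕ} (hm : 2 ≤ m) : Real.log m ≤ 2 * Nat.log 2 m := by
  have hlog : (1 : ℝ) ≤ Nat.log 2 m := Nat.one_le_cast.2 (Nat.log_pos one_lt_two hm)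
  calc Real.log m ≤ Real.log (2 ^ (Nat.log 2 m + 1)) :=
        Real.log_le_log (by positivity)
          (by exact_mod_cast (Nat.lt_pow_succ_log_self one_lt_two m).le)
    _ = (Nat.log 2 m + 1) * Real.log 2 := by rw [Real.log_pow]; push_cast; ring
    _ ≤ (Nat.log 2 m + 1) * 1 := by gcongr; linarith [Real.log_two_lt_d9]
    _ ≤ 2 * Nat.log 2 m := by linarith

theorem mul_log_le_of_emd_grid_embedding {Ω : Type*} [MeasurableSpace Ω] {ρ : Measure Ω} {m d : ℕ}
    (hm : 2 ≤ m) (hd : 2 ≤ d) {C : NNReal} {F : stdSimplex ℝ (GPt m d) → Lp ℝ 1 ρ}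
    (hF_ge : ∀ μ ν, tcSeminorm (GPt m d) (stdSimplexSub μ ν) ≤ ‖F μ - F ν‖)
    (hF_le : ∀ μ ν, ‖F μ - F ν‖ ≤ C * tcSeminorm (GPt m d) (stdSimplexSub μ ν)) :
    Nat.log 2 m * d / 640 ≤ C * (8 * 385 ^ 2 + 4) := by
  have hone : (1 : ℝ) ≤ (6 / 5) ^ d := one_le_pow₀ (by norm_num)
  have : NeZero ⌊(6 / 5 : ℝ) ^ d⌋₊ := ⟨(Nat.floor_pos.2 hone).ne'⟩
  have : NeZero m := ⟨by omega⟩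
  have hpow : 2 ^ Nat.log 2 m ≤ m := Nat.pow_log_le_self 2 (by omega)
  have hι := isometry_castLE_comp (d := d) hpow
  have hM : (6 / 5 : ℝ) ^ d ≤ 2 * ⌊(6 / 5 : ℝ) ^ d⌋₊ := by
    have hfloor : (1 : ℝ) ≤ ⌊(6 / 5 : ℝ) ^ d⌋₊ := Nat.one_le_cast.2 (Nat.floor_pos.2 hone)
    linarith [Nat.lt_floor_add_one ((6 / 5 : ℝ) ^ d)]
  exact (mul_div_le_sum_inv_mul_expect_tcSeminorm hd (Nat.floor_le (by positivity)) hι).trans <|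
    sum_inv_mul_expect_tcSeminorm_le_of_emd_embedding hd hM hF_ge hF_le fun i x =>
      (hι.dist_eq _ _).trans_le (dist_gridNext_le i x)

end Distortion

theorem emd_grid_L1_distortion_lower_bound_general :
    ∃ c : ℝ, 0 < c ∧ ∀ (Ω : Type*) [MeasurableSpace Ω] (ρ : Measure Ω) (m d : ℕ),
      2 ≤ m → 2 ≤ d → ∀ C : ℝ, 0 ≤ C → ∀ F : ProbMeas m d → Lp ℝ 1 ρ,
        (∀ μ ν : ProbMeas m d,
            tcNormG m d (μ.1 - ν.1) ≤ ‖F μ - F ν‖ ∧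
            ‖F μ - F ν‖ ≤ C * tcNormG m d (μ.1 - ν.1)) →
        c * d * Real.log m ≤ C := by
  refine ⟨1 / (1280 * (8 * 385 ^ 2 + 4)), by norm_num, fun Ω _ ρ m d hm hd C hC F hF => ?_⟩
  lift C to NNReal using hC
  have hbound := mul_log_le_of_emd_grid_embedding hm hd (F := F) (C := C)
    (fun μ ν => (tcNormG_sub_eq_tcSeminorm μ ν).symm.trans_le (hF μ ν).1)
    fun μ ν => (hF μ ν).2.trans_eq (congrArg _ (tcNormG_sub_eq_tcSeminorm μ ν))
  have hlog := mul_le_mul_of_nonneg_left (log_le_two_mul_natLog_two hm) (Nat.cast_nonneg (α := ℝ) d)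
  linarith

/-- Any embedding of `EMD({1,…,m}^d)` into `L_1` with bi-Lipschitz distortion at most `C`
satisfies `C ≥ c·d·log m` for a universal constant `c > 0`. -/
theorem emd_grid_L1_distortion_lower_bound :
    ∃ c : ℝ, 0 < c ∧ ∀ (m d : ℕ), 2 ≤ m → 2 ≤ d → ∀ C : ℝ, 1 ≤ C →
      ∀ F : ProbMeas m d → L1Space,
        (∀ μ ν : ProbMeas m d,
            tcNormG m d (μ.1 - ν.1) ≤ ‖F μ - F ν‖ ∧
            ‖F μ - F ν‖ ≤ C * tcNormG m d (μ.1 - ν.1)) →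
        c * d * Real.log m ≤ C := by
  obtain ⟨c, hc, h⟩ := emd_grid_L1_distortion_lower_bound_general
  exact ⟨c, hc, fun m d hm hd C hC => h _ _ m d hm hd C (zero_le_one.trans hC)⟩
end
end

section
/- Let n, d, k be integers with d ≥ 3 and 5 ≤ k ≤ n. Then E[|μ_k([2^n]^d)|] < (1/d)·(√2)^{16−k}. -/
open MeasureTheory Finset

noncomputable section

/-- Points of the grid `[2^n]^d` (coordinates taken 0-based). -/
abbrev GridPt (n d : ℕ) := Fin d → Fin (2^n)

/-- Normalized counting "volume" of a subset of the grid: `Vol(A) = 2^{-nd}|A|`. -/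
def Vol (n d : ℕ) (A : Finset (GridPt n d)) : ℝ := (A.card : ℝ) / 2^(n*d)

/-- The ℓ1 metric on the grid. -/
def gdist {n d : ℕ} (u v : GridPt n d) : ℝ := ∑ i, |((u i : ℕ) : ℝ) - ((v i : ℕ) : ℝ)|

/-- Indices of the dyadic cubes in `D_k`. -/
abbrev CubeIdx (d k : ℕ) := Fin d → Fin (2^k)

/-- The dyadic cube of side-cardinality `2^(n-k)` indexed by `j ∈ {0,…,2^k-1}^d`. -/
def cube (n d k : ℕ) (j : CubeIdx d k) : Finset (GridPt n d) :=
  Finset.univ.filter (fun x => ∀ i, (x i : ℕ) / 2^(n-k) = (j i : ℕ))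

/-- `p = 2^{-4d}`. -/
def pp (d : ℕ) : ℝ := ((2:ℝ)^(4*d))⁻¹

/-- The law of each `X_Q`: takes values `±1` with probability `p/2` each
and `0` with probability `1-p`. -/
def stepMeasure (d : ℕ) : Measure ℝ :=
  (Real.toNNReal (pp d / 2)) • Measure.dirac (1:ℝ)
  + (Real.toNNReal (pp d / 2)) • Measure.dirac (-1:ℝ)
  + (Real.toNNReal (1 - pp d)) • Measure.dirac (0:ℝ)

instance (d : ℕ) : IsFiniteMeasure (stepMeasure d) := by
  unfold stepMeasure; infer_instance

/-- The joint law of the i.i.d. family `{X_Q}_{Q ∈ D_k}`; a sample point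
`ω : CubeIdx d k → ℝ` records the values `X_Q = ω Q`. -/
def prodMeasure (d k : ℕ) : Measure (CubeIdx d k → ℝ) :=
  Measure.pi fun _ => stepMeasure d

/-- `μ_k(A) = ∑_{Q ∈ D_k} p⁻¹ 2^k X_Q Vol(A ∩ Q)`, as a function of the sample point `ω`. -/
def muMeas (n d k : ℕ) (A : Finset (GridPt n d)) (ω : CubeIdx d k → ℝ) : ℝ :=
  ∑ j : CubeIdx d k, (pp d)⁻¹ * 2^k * ω j * Vol n d (A ∩ cube n d k j)

/-!
Every cube of `D_k` has volume `2^{-kd}`, so `μ_k([2^n]^d) = p⁻¹ 2^k 2^{-kd} ∑_Q X_Q`. The `X_Q` are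
independent and centred with variance `p`, so by Cauchy–Schwarz
`E[|μ_k([2^n]^d)|]² ≤ (p⁻¹ 2^k 2^{-kd})² · 2^{kd} p = 2^{4d+2k-kd}`. Since `d² < 2^{d+1}`, this is
less than `d⁻² 2^{16-k}` as soon as `5d + 3k ≤ 15 + kd`, that is, `(d - 3)(k - 5) ≥ 0`.
-/

open ProbabilityTheory

section SecondMoment

lemma sq_integral_abs_le_variance_of_integral_eq_zero {Ω : Type*} [MeasurableSpace Ω]
    {P : Measure Ω} [IsProbabilityMeasure P] {X : Ω → ℝ} (hX : MemLp X 2 P) (hmean : P[X] = 0) :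
    (∫ ω, |X ω| ∂P) ^ 2 ≤ Var[X; P] := by
  have habs : Var[|X|; P] = ∫ ω, X ω ^ 2 ∂P - (∫ ω, |X ω| ∂P) ^ 2 := by
    simpa only [Pi.pow_apply, Pi.abs_apply, sq_abs] using variance_eq_sub hX.abs
  rw [variance_of_integral_eq_zero hX.aemeasurable hmean]
  exact sub_nonneg.mp (habs ▸ variance_nonneg _ _)

lemma sq_integral_abs_sum_pi_le_sum_variance {ι : Type*} [Fintype ι] {Ω : ι → Type*}
    [∀ i, MeasurableSpace (Ω i)] {P : ∀ i, Measure (Ω i)} [∀ i, IsProbabilityMeasure (P i)]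
    {X : ∀ i, Ω i → ℝ} (hX : ∀ i, MemLp (X i) 2 (P i)) (hmean : ∀ i, (P i)[X i] = 0) :
    (∫ ω, |∑ i, X i (ω i)| ∂Measure.pi P) ^ 2 ≤ ∑ i, Var[X i; P i] := by
  have hcoord (i : ι) : MemLp (fun ω ↦ X i (ω i)) 2 (Measure.pi P) :=
    (hX i).comp_measurePreserving (measurePreserving_eval P i)
  have hsum_mean : ∫ ω, ∑ i, X i (ω i) ∂Measure.pi P = 0 := by
    rw [integral_finsetSum _ fun i _ ↦ (hcoord i).integrable one_le_two]
    exact sum_eq_zero fun i _ ↦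
      (integral_comp_eval (hX i).aestronglyMeasurable).trans (hmean i)
  calc (∫ ω, |∑ i, X i (ω i)| ∂Measure.pi P) ^ 2
      ≤ Var[fun ω ↦ ∑ i, X i (ω i); Measure.pi P] :=
        sq_integral_abs_le_variance_of_integral_eq_zero
          (memLp_finsetSum _ fun i _ ↦ hcoord i) hsum_mean
    _ = ∑ i, Var[X i; P i] := by
        rw [← variance_sum_pi hX]
        congr 1
        exact (sum_fn _ _).symm

end SecondMoment

section StepMeasure

variable (d : ℕ)

lemma pp_pos : 0 < pp d := by
  unfold pp
  positivity

lemma pp_le_one : pp d ≤ 1 :=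
  inv_le_one_of_one_le₀ (one_le_pow₀ one_le_two)

instance : IsProbabilityMeasure (stepMeasure d) where
  measure_univ := by
    have hp := pp_pos d
    have hweights :
        Real.toNNReal (pp d / 2) + Real.toNNReal (pp d / 2) + Real.toNNReal (1 - pp d) = 1 := by
      rw [← Real.toNNReal_add (by positivity) (by positivity), add_halves,
        ← Real.toNNReal_add hp.le (sub_nonneg.mpr (pp_le_one d)), add_sub_cancel,
        Real.toNNReal_one]
    simp only [stepMeasure, Measure.add_apply, Measure.smul_apply, measure_univ,
      ENNReal.smul_def, smul_eq_mul, mul_one]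
    exact_mod_cast hweights

variable {E : Type*} [NormedAddCommGroup E]

lemma integrable_smul_dirac {α : Type*} [MeasurableSpace α] [MeasurableSingletonClass α]
    (c : NNReal) (a : α) (f : α → E) :
    Integrable f (c • Measure.dirac a) :=
  (integrable_dirac enorm_lt_top).smul_measure_nnreal

lemma integrable_stepMeasure (f : ℝ → E) : Integrable f (stepMeasure d) :=
  ((integrable_smul_dirac _ _ f).add_measure (integrable_smul_dirac _ _ f)).add_measure
    (integrable_smul_dirac _ _ f)

lemma integral_stepMeasure [NormedSpace ℝ E] [CompleteSpace E] (f : ℝ → E) :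
    ∫ x, f x ∂stepMeasure d = (pp d / 2) • f 1 + (pp d / 2) • f (-1) + (1 - pp d) • f 0 := by
  have hint (c : NNReal) (a : ℝ) := integrable_smul_dirac c a f
  rw [stepMeasure, integral_add_measure ((hint _ _).add_measure (hint _ _)) (hint _ _),
    integral_add_measure (hint _ _) (hint _ _)]
  simp only [integral_smul_nnreal_measure, integral_dirac, NNReal.smul_def,
    Real.coe_toNNReal _ (half_pos (pp_pos d)).le,
    Real.coe_toNNReal _ (sub_nonneg.mpr (pp_le_one d))]

lemma memLp_two_id_stepMeasure : MemLp id 2 (stepMeasure d) :=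
  (memLp_two_iff_integrable_sq aestronglyMeasurable_id).mpr (integrable_stepMeasure d _)

lemma integral_id_stepMeasure : ∫ x, x ∂stepMeasure d = 0 := by
  simp only [integral_stepMeasure, smul_eq_mul]
  ring

lemma variance_id_stepMeasure : Var[id; stepMeasure d] = pp d := by
  rw [variance_of_integral_eq_zero aemeasurable_id (integral_id_stepMeasure d),
    integral_stepMeasure]
  simp only [id_eq, smul_eq_mul]
  ring

lemma sq_integral_abs_sum_prodMeasure_le (k : ℕ) :
    (∫ ω, |∑ j, ω j| ∂prodMeasure d k) ^ 2 ≤ 2 ^ (k * d) * pp d := by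
  calc (∫ ω, |∑ j, ω j| ∂prodMeasure d k) ^ 2
      ≤ ∑ _j : CubeIdx d k, Var[id; stepMeasure d] :=
        sq_integral_abs_sum_pi_le_sum_variance (fun _ ↦ memLp_two_id_stepMeasure d)
          fun _ ↦ integral_id_stepMeasure d
    _ = 2 ^ (k * d) * pp d := by
        simp [variance_id_stepMeasure, pow_mul]

end StepMeasure

section DyadicCubes

lemma card_filter_fin_div_eq {N m q : ℕ} (hm : 0 < m) (hN : (q + 1) * m ≤ N) :
    #{x : Fin N | (x : ℕ) / m = q} = m := by
  have himage : ({x : Fin N | (x : ℕ) / m = q} : Finset (Fin N)).map Fin.valEmbedding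
      = Ico (q * m) ((q + 1) * m) := by
    ext x
    simp only [mem_map, mem_filter_univ, Fin.valEmbedding_apply, mem_Ico,
      ← Nat.le_div_iff_mul_le hm, ← Nat.div_lt_iff_lt_mul hm, Nat.lt_succ_iff]
    constructor
    · rintro ⟨y, rfl, rfl⟩
      exact ⟨le_rfl, le_rfl⟩
    · rintro ⟨hle, hge⟩
      have hx : x < (q + 1) * m := (Nat.div_lt_iff_lt_mul hm).mp (Nat.lt_succ_of_le hge)
      exact ⟨⟨x, hx.trans_le hN⟩, le_antisymm hge hle, rfl⟩
  rw [← card_map, himage, Nat.card_Ico, ← Nat.sub_mul, Nat.add_sub_cancel_left, one_mul]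

variable {n k : ℕ} (d : ℕ)

lemma card_cube (hkn : k ≤ n) (j : CubeIdx d k) : #(cube n d k j) = 2 ^ ((n - k) * d) := by
  have hside (i : Fin d) : ((j i : ℕ) + 1) * 2 ^ (n - k) ≤ 2 ^ n := by
    calc ((j i : ℕ) + 1) * 2 ^ (n - k) ≤ 2 ^ k * 2 ^ (n - k) := by gcongr; exact (j i).isLt
      _ = 2 ^ n := pow_mul_pow_sub 2 hkn
  have hprod : cube n d k j
      = Fintype.piFinset fun i ↦ {x : Fin (2 ^ n) | (x : ℕ) / 2 ^ (n - k) = j i} := by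
    ext x
    simp [cube]
  rw [hprod, Fintype.card_piFinset,
    prod_congr rfl fun i _ ↦ card_filter_fin_div_eq (by positivity) (hside i), prod_const,
    card_univ, Fintype.card_fin, pow_mul]

lemma vol_cube (hkn : k ≤ n) (j : CubeIdx d k) :
    Vol n d (cube n d k j) = ((2 : ℝ) ^ (k * d))⁻¹ := by
  have hexp : n * d = k * d + (n - k) * d := by rw [← add_mul, Nat.add_sub_cancel' hkn]
  rw [Vol, card_cube d hkn, hexp, pow_add]
  push_cast
  field_simp

lemma muMeas_univ (hkn : k ≤ n) (ω : CubeIdx d k → ℝ) :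
    muMeas n d k univ ω = (pp d)⁻¹ * 2 ^ k * ((2 : ℝ) ^ (k * d))⁻¹ * ∑ j, ω j := by
  simp only [muMeas, univ_inter, vol_cube d hkn, mul_sum]
  exact sum_congr rfl fun j _ ↦ by ring

lemma sq_integral_abs_muMeas_univ_le (hkn : k ≤ n) :
    (∫ ω, |muMeas n d k univ ω| ∂prodMeasure d k) ^ 2
      ≤ 2 ^ (4 * d + 2 * k) / 2 ^ (k * d) := by
  simp only [muMeas_univ d hkn, abs_mul, integral_const_mul, mul_pow, sq_abs]
  calc ((pp d)⁻¹) ^ 2 * (2 ^ k) ^ 2 * (((2 : ℝ) ^ (k * d))⁻¹) ^ 2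
        * (∫ ω, |∑ j, ω j| ∂prodMeasure d k) ^ 2
      ≤ ((pp d)⁻¹) ^ 2 * (2 ^ k) ^ 2 * (((2 : ℝ) ^ (k * d))⁻¹) ^ 2 * (2 ^ (k * d) * pp d) := by
        gcongr
        exact sq_integral_abs_sum_prodMeasure_le d k
    _ = 2 ^ (4 * d + 2 * k) / 2 ^ (k * d) := by
        rw [pp, pow_add, mul_comm 2 k, pow_mul 2 k 2]
        field_simp

end DyadicCubes

section Numerics

lemma sq_lt_two_pow_succ (d : ℕ) : d ^ 2 < 2 ^ (d + 1) := by
  induction d with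
  | zero => norm_num
  | succ d ih =>
    have hlin : d + 1 ≤ 2 ^ d := Nat.lt_two_pow_self
    calc (d + 1) ^ 2 = d ^ 2 + (2 * d + 1) := by ring
      _ < 2 ^ (d + 1) + 2 * 2 ^ d := by omega
      _ = 2 ^ (d + 1 + 1) := by ring

lemma sq_mul_two_pow_lt {d k : ℕ} (hd : 3 ≤ d) (hk : 5 ≤ k) :
    d ^ 2 * 2 ^ (4 * d + 3 * k) < 2 ^ (16 + k * d) := by
  have hexp : 5 * d + 3 * k ≤ 15 + k * d := by
    zify at hd hk ⊢
    linear_combination mul_nonneg (sub_nonneg.mpr hd) (sub_nonneg.mpr hk)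
  calc d ^ 2 * 2 ^ (4 * d + 3 * k)
      < 2 ^ (d + 1) * 2 ^ (4 * d + 3 * k) := by
        gcongr
        exact sq_lt_two_pow_succ d
    _ = 2 ^ (d + 1 + (4 * d + 3 * k)) := (pow_add ..).symm
    _ ≤ 2 ^ (16 + k * d) := Nat.pow_le_pow_right two_pos (by omega)

lemma sqrt_rpow_sq {x : ℝ} (hx : 0 ≤ x) (y : ℝ) : (√x ^ y) ^ 2 = x ^ y := by
  rw [Real.rpow_pow_comm (Real.sqrt_nonneg x), Real.sq_sqrt hx]

lemma two_pow_div_lt_sq {d k : ℕ} (hd : 3 ≤ d) (hk : 5 ≤ k) :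
    (2 : ℝ) ^ (4 * d + 2 * k) / 2 ^ (k * d) < (1 / d * √2 ^ ((16 : ℝ) - k)) ^ 2 := by
  have hd0 : (0 : ℝ) < d := by exact_mod_cast (by omega : 0 < d)
  have hnat : (d : ℝ) ^ 2 * 2 ^ (4 * d + 3 * k) < 2 ^ (16 + k * d) := by
    exact_mod_cast sq_mul_two_pow_lt hd hk
  have hrhs : (1 / d * √2 ^ ((16 : ℝ) - k)) ^ 2 = 2 ^ 16 / (d ^ 2 * 2 ^ k) := by
    rw [mul_pow, sqrt_rpow_sq zero_le_two, Real.rpow_sub two_pos, Real.rpow_natCast,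
      Real.rpow_ofNat]
    field_simp
  rw [hrhs, div_lt_div_iff₀ (by positivity) (mul_pos (pow_pos hd0 2) (by positivity)), ← pow_add]
  calc (2 : ℝ) ^ (4 * d + 2 * k) * (d ^ 2 * 2 ^ k) = d ^ 2 * 2 ^ (4 * d + 3 * k) := by ring
    _ < 2 ^ (16 + k * d) := hnat

end Numerics

/-- `E[|μ_k([2^n]^d)|] < (1/d)·(√2)^{16-k}`. -/
theorem expected_total_mass_lt (n d k : ℕ) (hd : 3 ≤ d) (hk : 5 ≤ k) (hkn : k ≤ n) :
    ∫ ω, |muMeas n d k Finset.univ ω| ∂(prodMeasure d k)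
      < (1/(d:ℝ)) * Real.sqrt 2 ^ ((16:ℝ) - (k:ℝ)) := by
  refine lt_of_pow_lt_pow_left₀ 2 (by positivity) ?_
  exact (sq_integral_abs_muMeas_univ_le d hkn).trans_lt (two_pow_div_lt_sq hd hk)
end
end
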